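/- There exist constants ν₀ ∈ (0,1], C₁ > 0 and, for each p ≥ 0, a constant c(p) > 0, all depending only on f and D (and p), such that for every ν ∈ (0,ν₀] and every ℓ ∈ (0, C₁ν], the structure function satisfies S_p(ℓ) ≥ c(p) ℓ^p if 0 ≤ p ≤ 1, and S_p(ℓ) ≥ c(p) ℓ^p ν^{−(p−1)} if p ≥ 1. -/

import Mathlib

open MeasureTheory Set
open scoped ENNReal

/-- The `L^p` norm (on the circle, i.e. over one period `(0,1]`) of the `m`-th
derivative of a function `v : ℝ → ℝ` (identified with a function on `S¹ = ℝ/ℤ`). -/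
noncomputable def sobLp (m : ℕ) (p : ℝ≥0∞) (v : ℝ → ℝ) : ℝ :=
  (eLpNorm (iteratedDeriv m v) p (volume.restrict (Ioc (0:ℝ) 1))).toReal

/-- `u` is a smooth, space-periodic, zero-mean-value solution of the generalised
Burgers equation `u_t + f'(u) u_x - ν u_xx = 0` with strongly convex `f` and
nonzero initial condition. -/
structure IsBurgersSolution (f : ℝ → ℝ) (σ ν : ℝ) (u : ℝ → ℝ → ℝ) : Prop where
  hf : ContDiff ℝ (⊤ : ℕ∞) f
  hσ : 0 < σ
  hconv : ∀ y, σ ≤ iteratedDeriv 2 f y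
  hν : 0 < ν
  hu : ContDiffOn ℝ (⊤ : ℕ∞) (Function.uncurry u) (Ici (0:ℝ) ×ˢ univ)
  hper : ∀ t x, u t (x + 1) = u t x
  hpde : ∀ t, 0 < t → ∀ x,
    deriv (fun s => u s x) t + deriv f (u t x) * deriv (u t) x
      - ν * deriv (deriv (u t)) x = 0
  hmean : ∀ t, 0 ≤ t → ∫ x in Ioc (0:ℝ) 1, u t x = 0
  hinit : ∃ x, u 0 x ≠ 0

/-- The quantity `D = max(|u₀|₁⁻¹, |u₀|_{1,∞})`. -/
noncomputable def burgersD (u : ℝ → ℝ → ℝ) : ℝ :=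
  max (sobLp 0 1 (u 0))⁻¹ (sobLp 1 ⊤ (u 0))

/-- `T₁ = D⁻² C̃⁻¹ / 4`. -/
noncomputable def burgersT₁ (D Ct : ℝ) : ℝ := (D ^ 2)⁻¹ * Ct⁻¹ / 4

/-- `T₂ = max(3T₁/2, 2Dσ⁻¹)`. -/
noncomputable def burgersT₂ (σ D Ct : ℝ) : ℝ :=
  max (3 / 2 * burgersT₁ D Ct) (2 * D * σ⁻¹)

/-- Time average over `[T₁, T₂]`. -/
noncomputable def timeAvg (T₁ T₂ : ℝ) (A : ℝ → ℝ) : ℝ :=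
  (T₂ - T₁)⁻¹ * ∫ t in T₁..T₂, A t

/-- The structure function `S_p(ℓ)`. -/
noncomputable def structFun (T₁ T₂ : ℝ) (u : ℝ → ℝ → ℝ) (p ℓ : ℝ) : ℝ :=
  timeAvg T₁ T₂ (fun t => ∫ x in Ioc (0:ℝ) 1, |u t (x + ℓ) - u t x| ^ p)


open Filter Topology

/-- the closed half plane -/
def HP : Set (ℝ × ℝ) := Ici (0:ℝ) ×ˢ univ

def Smo (u : ℝ → ℝ → ℝ) : Prop := ContDiffOn ℝ (⊤ : ℕ∞) (Function.uncurry u) HP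

lemma HP_uniq : UniqueDiffOn ℝ HP := (uniqueDiffOn_Ici 0).prod uniqueDiffOn_univ

lemma HP_nhds {t x : ℝ} (ht : 0 < t) : HP ∈ 𝓝 ((t, x) : ℝ × ℝ) :=
  prod_mem_nhds (Ici_mem_nhds ht) univ_mem

lemma Smo.slice {u : ℝ → ℝ → ℝ} (h : Smo u) {t : ℝ} (ht : 0 ≤ t) : ContDiff ℝ (⊤ : ℕ∞) (u t) := by
  rw [← contDiffOn_univ]
  have : ContDiff ℝ (⊤ : ℕ∞) (fun x : ℝ => ((t, x) : ℝ × ℝ)) := by fun_prop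
  exact ContDiffOn.comp (g := Function.uncurry u) h this.contDiffOn (fun x _ => ⟨ht, mem_univ _⟩)

lemma Smo.hasDeriv_slice {u : ℝ → ℝ → ℝ} (h : Smo u) {t : ℝ} (ht : 0 ≤ t) (x : ℝ) :
    HasDerivAt (u t) (deriv (u t) x) x :=
  ((h.slice ht).differentiable (by simp) x).hasDerivAt

lemma Smo.deriv_eq {u : ℝ → ℝ → ℝ} (h : Smo u) {t : ℝ} (ht : 0 ≤ t) (x : ℝ) :
    deriv (u t) x = fderivWithin ℝ (Function.uncurry u) HP (t, x) (0, 1) := by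
  have hm : ((t, x) : ℝ × ℝ) ∈ HP := ⟨ht, mem_univ _⟩
  have h1 := ((h.differentiableOn (by simp)) (t, x) hm).hasFDerivWithinAt
  have h2 : HasDerivAt (fun y : ℝ => ((t, y) : ℝ × ℝ)) (0, 1) x :=
    (hasDerivAt_const x t).prodMk (hasDerivAt_id x)
  exact (HasFDerivWithinAt.comp_hasDerivAt x h1 h2
    (Eventually.of_forall fun y => ⟨ht, mem_univ _⟩)).deriv

lemma Smo.dx {u : ℝ → ℝ → ℝ} (h : Smo u) : Smo (fun t x => deriv (u t) x) := by
  have h1 : ContDiffOn ℝ (⊤ : ℕ∞) (fderivWithin ℝ (Function.uncurry u) HP) HP :=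
    ContDiffOn.fderivWithin h HP_uniq (by simp)
  have h2 : ContDiffOn ℝ (⊤ : ℕ∞)
      (fun z => fderivWithin ℝ (Function.uncurry u) HP z (0, 1)) HP :=
    h1.clm_apply contDiffOn_const
  refine h2.congr ?_
  rintro ⟨t, x⟩ ⟨ht, -⟩
  exact h.deriv_eq ht x

lemma Smo.contDiffAt {u : ℝ → ℝ → ℝ} (h : Smo u) {t : ℝ} (ht : 0 < t) (x : ℝ) :
    ContDiffAt ℝ (⊤ : ℕ∞) (Function.uncurry u) (t, x) :=
  ContDiffOn.contDiffAt h (HP_nhds ht)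

lemma Smo.hasDerivAt_t {u : ℝ → ℝ → ℝ} (h : Smo u) {t : ℝ} (ht : 0 < t) (x : ℝ) :
    HasDerivAt (fun s => u s x) (fderiv ℝ (Function.uncurry u) (t, x) (1, 0)) t := by
  have h1 := ((h.contDiffAt ht x).differentiableAt (by simp)).hasFDerivAt
  have h2 : HasDerivAt (fun s : ℝ => ((s, x) : ℝ × ℝ)) (1, 0) t :=
    (hasDerivAt_id t).prodMk (hasDerivAt_const t x)
  exact HasFDerivAt.comp_hasDerivAt t h1 h2

lemma Smo.hasDerivAt_x {u : ℝ → ℝ → ℝ} (h : Smo u) {t : ℝ} (ht : 0 < t) (x : ℝ) :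
    HasDerivAt (u t) (fderiv ℝ (Function.uncurry u) (t, x) (0, 1)) x := by
  have h1 := ((h.contDiffAt ht x).differentiableAt (by simp)).hasFDerivAt
  have h2 : HasDerivAt (fun s : ℝ => ((t, s) : ℝ × ℝ)) (0, 1) x :=
    (hasDerivAt_const x t).prodMk (hasDerivAt_id x)
  exact HasFDerivAt.comp_hasDerivAt x h1 h2

/-- mixed derivatives commute -/
lemma Smo.comm {u : ℝ → ℝ → ℝ} (h : Smo u) {t : ℝ} (ht : 0 < t) (x : ℝ) :
    HasDerivAt (fun s => deriv (u s) x) (deriv (fun y => deriv (fun s => u s y) t) x) t := by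
  have hs : IsSymmSndFDerivAt ℝ (Function.uncurry u) (t, x) :=
    (h.contDiffAt ht x).isSymmSndFDerivAt (by simp only [minSmoothness_of_isRCLikeNormedField]; exact WithTop.coe_le_coe.2 (le_top : (2:ℕ∞) ≤ ⊤))
  have hd : HasFDerivAt (fderiv ℝ (Function.uncurry u))
      (fderiv ℝ (fderiv ℝ (Function.uncurry u)) (t, x)) (t, x) := by
    have := (h.contDiffAt ht x).fderiv_right (m := (⊤ : ℕ∞)) (by simp)
    exact (this.differentiableAt (by simp)).hasFDerivAt
  have h2 : HasDerivAt (fun s : ℝ => ((s, x) : ℝ × ℝ)) (1, 0) t :=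
    (hasDerivAt_id t).prodMk (hasDerivAt_const t x)
  have h3 : HasDerivAt (fun s : ℝ => ((t, s) : ℝ × ℝ)) (0, 1) x :=
    (hasDerivAt_const x t).prodMk (hasDerivAt_id x)
  have e1 : (fun y => deriv (fun s => u s y) t)
      = fun y => fderiv ℝ (Function.uncurry u) (t, y) (1, 0) := by
    funext y; exact (h.hasDerivAt_t ht y).deriv
  have d1 : HasDerivAt (fun y => fderiv ℝ (Function.uncurry u) (t, y) (1, 0))
      (fderiv ℝ (fderiv ℝ (Function.uncurry u)) (t, x) (0, 1) (1, 0)) x := by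
    have h4 := HasFDerivAt.comp_hasDerivAt x hd h3
    have := h4.clm_apply (hasDerivAt_const x ((1, 0) : ℝ × ℝ))
    rw [map_zero, add_zero] at this
    exact this
  have d2 : HasDerivAt (fun s => fderiv ℝ (Function.uncurry u) (s, x) (0, 1))
      (fderiv ℝ (fderiv ℝ (Function.uncurry u)) (t, x) (1, 0) (0, 1)) t := by
    have h4 := HasFDerivAt.comp_hasDerivAt t hd h2
    have := h4.clm_apply (hasDerivAt_const t ((0, 1) : ℝ × ℝ))
    rw [map_zero, add_zero] at this
    exact this
  rw [e1, d1.deriv, hs (0, 1) (1, 0)]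
  refine d2.congr_of_eventuallyEq ?_
  filter_upwards [Ioi_mem_nhds ht] with s hs
  exact (h.hasDerivAt_x hs x).deriv

lemma Smo.cont {u : ℝ → ℝ → ℝ} (h : Smo u) : ContinuousOn (Function.uncurry u) HP :=
  ContDiffOn.continuousOn h

/-- parametric integral is continuous -/
lemma cont_param {F : ℝ → ℝ → ℝ} (h : ContinuousOn (Function.uncurry F) HP) (a b : ℝ) :
    ContinuousOn (fun t => ∫ x in a..b, F t x) (Ici 0) := by
  have h1 : Continuous (Function.uncurry fun t x => F (max t 0) x) := by
    have h0 : Continuous (fun z : ℝ × ℝ => ((max z.1 0, z.2) : ℝ × ℝ)) := by fun_prop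
    exact h.comp_continuous h0 (fun z => ⟨mem_Ici.2 (le_max_right _ _), mem_univ _⟩)
  have h2 := intervalIntegral.continuous_parametric_intervalIntegral_of_continuous' (μ := volume) h1 a b
  refine h2.continuousOn.congr ?_
  intro t ht
  have : max t 0 = t := max_eq_left ht
  simp only [this]

lemma cont_slice {F : ℝ → ℝ → ℝ} (h : ContinuousOn (Function.uncurry F) HP) {t : ℝ} (ht : 0 ≤ t) :
    Continuous (F t) :=
  h.comp_continuous (f := fun x : ℝ => ((t, x) : ℝ × ℝ)) (by fun_prop) (fun _ => ⟨ht, mem_univ _⟩)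

/-- differentiate under the integral -/
lemma hasDeriv_param {F F' : ℝ → ℝ → ℝ} (h : ContinuousOn (Function.uncurry F) HP)
    (h' : ContinuousOn (Function.uncurry F') HP) {t : ℝ} (ht : 0 < t)
    (hd : ∀ s, 0 < s → ∀ x, HasDerivAt (fun r => F r x) (F' s x) s) :
    HasDerivAt (fun s => ∫ x in (0:ℝ)..1, F s x) (∫ x in (0:ℝ)..1, F' t x) t := by
  have hK : IsCompact (Icc (t/2) (t+1) ×ˢ Icc (0:ℝ) 1) := isCompact_Icc.prod isCompact_Icc
  have hKs : Icc (t/2) (t+1) ×ˢ Icc (0:ℝ) 1 ⊆ HP := by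
    rintro ⟨s, x⟩ ⟨hs, -⟩
    exact ⟨by have := hs.1; simp only [mem_Ici] at *; linarith, mem_univ _⟩
  obtain ⟨C, hC⟩ := hK.exists_bound_of_continuousOn (h'.mono hKs)
  refine (intervalIntegral.hasDerivAt_integral_of_dominated_loc_of_deriv_le
    (s := Icc (t/2) (t+1)) (bound := fun _ => C)
    (Icc_mem_nhds (by linarith) (by linarith)) ?_ ?_ ?_ ?_ ?_ ?_).2
  · filter_upwards [Ioi_mem_nhds ht] with s hs
    exact (cont_slice h (le_of_lt hs)).aestronglyMeasurable
  · exact (cont_slice h ht.le).intervalIntegrable _ _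
  · exact (cont_slice h' ht.le).aestronglyMeasurable
  · refine Eventually.of_forall fun x hx s hs => hC (s, x) ⟨hs, ?_⟩
    rw [uIoc_of_le zero_le_one] at hx
    exact ⟨hx.1.le, hx.2⟩
  · exact intervalIntegrable_const
  · refine Eventually.of_forall fun x _ s hs => hd s (by linarith [hs.1]) x

structure PerC2 (v v1 v2 : ℝ → ℝ) : Prop where
  d1 : ∀ x, HasDerivAt v (v1 x) x
  d2 : ∀ x, HasDerivAt v1 (v2 x) x
  c2 : Continuous v2
  p0 : Function.Periodic v 1
  p1 : Function.Periodic v1 1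
  p2 : Function.Periodic v2 1

lemma PerC2.c1 {v v1 v2 : ℝ → ℝ} (h : PerC2 v v1 v2) : Continuous v1 :=
  continuous_iff_continuousAt.2 fun x => (h.d2 x).continuousAt

lemma PerC2.c0 {v v1 v2 : ℝ → ℝ} (h : PerC2 v v1 v2) : Continuous v :=
  continuous_iff_continuousAt.2 fun x => (h.d1 x).continuousAt

lemma cs_int {g : ℝ → ℝ} (hg : Continuous g) {a b : ℝ} (hab : a < b) :
    (∫ x in a..b, |g x|) ^ 2 ≤ (b - a) * ∫ x in a..b, g x ^ 2 := by
  set m := ∫ x in a..b, |g x| with hm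
  have hL : 0 < b - a := by linarith
  have h0 : 0 ≤ ∫ x in a..b, ((b - a) * |g x| - m) ^ 2 :=
    intervalIntegral.integral_nonneg hab.le fun x _ => sq_nonneg _
  have h1 : ∫ x in a..b, ((b - a) * |g x| - m) ^ 2
      = (b - a) ^ 2 * (∫ x in a..b, g x ^ 2) - 2 * (b - a) * m * m + m ^ 2 * (b - a) := by
    have e : ∀ x, ((b - a) * |g x| - m) ^ 2
        = (b - a) ^ 2 * g x ^ 2 - 2 * (b - a) * m * |g x| + m ^ 2 := by
      intro x; rw [← sq_abs (g x)]; ring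
    simp only [e]
    rw [intervalIntegral.integral_add, intervalIntegral.integral_sub,
      intervalIntegral.integral_const_mul, intervalIntegral.integral_const_mul,
      intervalIntegral.integral_const, ← hm, smul_eq_mul]
    · ring
    all_goals exact Continuous.intervalIntegrable (by fun_prop) _ _
  rw [h1] at h0
  have h2 : 0 ≤ (b - a) * ((b - a) * (∫ x in a..b, g x ^ 2) - m ^ 2) := by nlinarith
  have := nonneg_of_mul_nonneg_right h2 hL
  linarith

lemma per_shift {g : ℝ → ℝ} (hp : Function.Periodic g 1) (s : ℝ) :
    ∫ x in (0:ℝ)..1, g (x + s) = ∫ x in (0:ℝ)..1, g x := by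
  rw [intervalIntegral.integral_comp_add_right]
  have := hp.intervalIntegral_add_eq s 0
  simpa [add_comm] using this

lemma fub {g : ℝ → ℝ} (hg : Continuous g) (hp : Function.Periodic g 1) (ℓ : ℝ) :
    ∫ x in (0:ℝ)..1, (∫ y in x..x+ℓ, g y) = ℓ * ∫ x in (0:ℝ)..1, g x := by
  have e1 : ∀ x, ∫ y in x..x+ℓ, g y = ∫ s in (0:ℝ)..ℓ, g (x + s) := by
    intro x
    rw [intervalIntegral.integral_comp_add_left]; simp
  simp only [e1]
  have hc : Continuous (Function.uncurry fun x s => g (x + s)) := by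
    have : Continuous (fun z : ℝ × ℝ => g (z.1 + z.2)) := by fun_prop
    exact this
  rw [intervalIntegral_intervalIntegral_swap
    ((hc.continuousOn.integrableOn_compact (isCompact_uIcc.prod isCompact_uIcc)).mono_set
      (prod_mono uIoc_subset_uIcc uIoc_subset_uIcc))]
  simp only [per_shift hp]
  simp

lemma cont_win {k : ℝ → ℝ} (hk : Continuous k) (ℓ : ℝ) :
    Continuous (fun x => ∫ y in x..x+ℓ, k y) := by
  have hd : ∀ x, HasDerivAt (fun x => ∫ y in (0:ℝ)..x, k y) (k x) x := fun x =>
    intervalIntegral.integral_hasDerivAt_right (hk.intervalIntegrable _ _)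
      hk.stronglyMeasurable.stronglyMeasurableAtFilter hk.continuousAt
  have hK : Continuous (fun x => ∫ y in (0:ℝ)..x, k y) :=
    continuous_iff_continuousAt.2 fun x => (hd x).continuousAt
  have e : (fun x => ∫ y in x..x+ℓ, k y)
      = fun x => (∫ y in (0:ℝ)..(x+ℓ), k y) - ∫ y in (0:ℝ)..x, k y := by
    funext x
    rw [intervalIntegral.integral_interval_sub_left] <;> exact hk.intervalIntegrable _ _
  rw [e]
  exact (hK.comp (continuous_id.add continuous_const)).sub hK

lemma int_sq_le {g : ℝ → ℝ} (hg : Continuous g) (hp : Function.Periodic g 1) {ℓ : ℝ} (hl : 0 < ℓ) :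
    ∫ x in (0:ℝ)..1, (∫ y in x..x+ℓ, |g y|) ^ 2 ≤ ℓ ^ 2 * ∫ x in (0:ℝ)..1, g x ^ 2 := by
  have hg2 : Continuous (fun x => g x ^ 2) := by fun_prop
  have hp2 : Function.Periodic (fun x => g x ^ 2) 1 := fun x => by simp only [hp x]
  calc ∫ x in (0:ℝ)..1, (∫ y in x..x+ℓ, |g y|) ^ 2
      ≤ ∫ x in (0:ℝ)..1, ℓ * (∫ y in x..x+ℓ, g y ^ 2) := by
        refine intervalIntegral.integral_mono_on zero_le_one ?_ ?_ ?_
        · exact ((cont_win (by fun_prop) ℓ).pow 2).intervalIntegrable _ _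
        · exact (continuous_const.mul (cont_win (by fun_prop) ℓ)).intervalIntegrable _ _
        · intro x _
          have := cs_int hg (show x < x + ℓ by linarith)
          simpa using this
    _ = ℓ ^ 2 * ∫ x in (0:ℝ)..1, g x ^ 2 := by
        rw [intervalIntegral.integral_const_mul, fub hg2 hp2]; ring

lemma incr_eq {v v1 : ℝ → ℝ} (d1 : ∀ x, HasDerivAt v (v1 x) x) (c1 : Continuous v1) (a b : ℝ) :
    v b - v a = ∫ y in a..b, v1 y :=
  (intervalIntegral.integral_eq_sub_of_hasDerivAt (fun x _ => d1 x)
    (c1.intervalIntegrable _ _)).symm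

lemma incr_abs {v v1 : ℝ → ℝ} (d1 : ∀ x, HasDerivAt v (v1 x) x) (c1 : Continuous v1) {a b : ℝ}
    (hab : a ≤ b) : |v b - v a| ≤ ∫ y in a..b, |v1 y| := by
  rw [incr_eq d1 c1]; exact intervalIntegral.abs_integral_le_integral_abs hab

lemma PerC2.w2_upper {v v1 v2 : ℝ → ℝ} (h : PerC2 v v1 v2) {ℓ : ℝ} (hl : 0 < ℓ) :
    ∫ x in (0:ℝ)..1, (v (x + ℓ) - v x) ^ 2 ≤ ℓ ^ 2 * ∫ x in (0:ℝ)..1, v1 x ^ 2 := by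
  have c0 := h.c0
  have c1 := h.c1
  refine le_trans (intervalIntegral.integral_mono_on zero_le_one ?_ ?_ ?_) (int_sq_le c1 h.p1 hl)
  · exact Continuous.intervalIntegrable (by fun_prop) _ _
  · exact ((cont_win c1.abs ℓ).pow 2).intervalIntegrable _ _
  · intro x _
    have := incr_abs h.d1 c1 (show x ≤ x + ℓ by linarith)
    rw [← sq_abs (v (x + ℓ) - v x)]
    exact pow_le_pow_left₀ (abs_nonneg _) this 2

lemma PerC2.w2_lower {v v1 v2 : ℝ → ℝ} (h : PerC2 v v1 v2) {ℓ : ℝ} (hl : 0 < ℓ) :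
    ℓ ^ 2 / 2 * (∫ x in (0:ℝ)..1, v1 x ^ 2) - ℓ ^ 4 * (∫ x in (0:ℝ)..1, v2 x ^ 2)
      ≤ ∫ x in (0:ℝ)..1, (v (x + ℓ) - v x) ^ 2 := by
  have c0 := h.c0
  have c1 := h.c1
  have c2 := h.c2
  have hpt : ∀ x, ℓ ^ 2 / 2 * v1 x ^ 2
      ≤ (v (x + ℓ) - v x) ^ 2 + ℓ ^ 2 * (∫ y in x..x+ℓ, |v2 y|) ^ 2 := by
    intro x
    set m := ∫ y in x..x+ℓ, |v2 y| with hm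
    have hR : |(v (x + ℓ) - v x) - ℓ * v1 x| ≤ ℓ * m := by
      have e : (v (x + ℓ) - v x) - ℓ * v1 x = ∫ y in x..x+ℓ, (v1 y - v1 x) := by
        rw [incr_eq h.d1 c1, intervalIntegral.integral_sub (c1.intervalIntegrable _ _)
          intervalIntegrable_const, intervalIntegral.integral_const]
        simp
      rw [e]
      have := intervalIntegral.norm_integral_le_of_norm_le_const (a := x) (b := x + ℓ)
        (f := fun y => v1 y - v1 x) (C := m) ?_
      · rw [Real.norm_eq_abs] at this
        refine this.trans (le_of_eq ?_)
        rw [add_sub_cancel_left, abs_of_pos hl, mul_comm]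
      · intro y hy
        rw [uIoc_of_le (by linarith)] at hy
        rw [Real.norm_eq_abs]
        refine (incr_abs h.d2 c2 hy.1.le).trans ?_
        refine intervalIntegral.integral_mono_interval le_rfl hy.1.le hy.2 ?_ ?_
        · exact Eventually.of_forall fun z => abs_nonneg _
        · exact c2.abs.intervalIntegrable _ _
    have hm0 : 0 ≤ m := intervalIntegral.integral_nonneg (by linarith) fun _ _ => abs_nonneg _
    have h2 : ((v (x + ℓ) - v x) - ℓ * v1 x) ^ 2 ≤ (ℓ * m) ^ 2 := by
      rw [← sq_abs]; exact pow_le_pow_left₀ (abs_nonneg _) hR 2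
    nlinarith [sq_nonneg ((v (x + ℓ) - v x) + ((v (x + ℓ) - v x) - ℓ * v1 x))]
  have hI := intervalIntegral.integral_mono_on (μ := volume) (zero_le_one (α := ℝ))
    (f := fun x => ℓ ^ 2 / 2 * v1 x ^ 2)
    (g := fun x => (v (x + ℓ) - v x) ^ 2 + ℓ ^ 2 * (∫ y in x..x+ℓ, |v2 y|) ^ 2)
    (Continuous.intervalIntegrable (by fun_prop) _ _)
    (Continuous.intervalIntegrable (by
      have := cont_win c2.abs ℓ
      fun_prop) _ _) (fun x _ => hpt x)
  rw [intervalIntegral.integral_const_mul, intervalIntegral.integral_add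
    (Continuous.intervalIntegrable (by fun_prop) _ _)
    (Continuous.intervalIntegrable (by
      have := cont_win c2.abs ℓ
      fun_prop) _ _), intervalIntegral.integral_const_mul] at hI
  have h3 := mul_le_mul_of_nonneg_left (int_sq_le c2 h.p2 hl) (sq_nonneg ℓ)
  nlinarith

/-- a periodic `C¹` function has a critical point in `[x, x+1]` -/
lemma PerC2.crit {v v1 v2 : ℝ → ℝ} (h : PerC2 v v1 v2) (x : ℝ) : ∃ z ∈ Icc x (x+1), v1 z = 0 := by
  obtain ⟨z, hz, hz'⟩ := exists_hasDerivAt_eq_zero (f := v) (f' := v1) (show x < x + 1 by linarith)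
    h.c0.continuousOn (h.p0 x).symm (fun y _ => h.d1 y)
  exact ⟨z, Ioo_subset_Icc_self hz, hz'⟩

lemma PerC2.sup1 {v v1 v2 : ℝ → ℝ} (h : PerC2 v v1 v2) {ν : ℝ} (hν : 0 < ν) (x : ℝ) :
    |v1 x| ≤ (1/2) * (1/ν + (∫ y in (0:ℝ)..1, v1 y ^ 2) + ν ^ 2 * ∫ y in (0:ℝ)..1, v2 y ^ 2) := by
  have c1 := h.c1
  have c2 := h.c2
  obtain ⟨z, hz, hz0⟩ := h.crit (x - 1)
  have hzx : z ≤ x := by linarith [hz.2]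
  have hd : ∀ y, HasDerivAt (fun y => v1 y ^ 2) (2 * v1 y * v2 y) y := by
    intro y
    have := (h.d2 y).fun_pow 2
    simpa using this
  have h1 := incr_eq hd (by fun_prop) z x
  have hP : Function.Periodic (fun y => v1 y ^ 2 / ν + ν * v2 y ^ 2) 1 := fun y => by
    simp only [h.p1 y, h.p2 y]
  have hcP : Continuous (fun y => v1 y ^ 2 / ν + ν * v2 y ^ 2) := by fun_prop
  have h2 : ∫ y in z..x, 2 * v1 y * v2 y ≤ ∫ y in z..x, (v1 y ^ 2 / ν + ν * v2 y ^ 2) := by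
    refine intervalIntegral.integral_mono_on hzx ?_ (hcP.intervalIntegrable _ _) ?_
    · exact Continuous.intervalIntegrable (by fun_prop) _ _
    · intro y _
      have : v1 y ^ 2 / ν + ν * v2 y ^ 2 - 2 * v1 y * v2 y = (v1 y - ν * v2 y) ^ 2 / ν := by
        field_simp; ring
      have h' : 0 ≤ (v1 y - ν * v2 y) ^ 2 / ν := by positivity
      linarith
  have h3 : ∫ y in z..x, (v1 y ^ 2 / ν + ν * v2 y ^ 2)
      ≤ ∫ y in (x-1)..(x-1)+1, (v1 y ^ 2 / ν + ν * v2 y ^ 2) := by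
    refine intervalIntegral.integral_mono_interval hz.1 hzx (by linarith) ?_
      (hcP.intervalIntegrable _ _)
    refine Eventually.of_forall fun y => ?_
    show 0 ≤ v1 y ^ 2 / ν + ν * v2 y ^ 2
    positivity
  have h30 : ∫ y in (0:ℝ)..1, (v1 y ^ 2 / ν + ν * v2 y ^ 2)
      = (∫ y in (0:ℝ)..1, v1 y ^ 2) / ν + ν * ∫ y in (0:ℝ)..1, v2 y ^ 2 := by
    rw [intervalIntegral.integral_add
      (Continuous.intervalIntegrable (by fun_prop) _ _)
      (Continuous.intervalIntegrable (by fun_prop) _ _), intervalIntegral.integral_const_mul,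
      intervalIntegral.integral_div]
  rw [hP.intervalIntegral_add_eq (x-1) 0, zero_add, h30] at h3
  simp only [hz0] at h1
  set Y := ∫ y in (0:ℝ)..1, v1 y ^ 2
  set Z := ∫ y in (0:ℝ)..1, v2 y ^ 2
  have h4 : v1 x ^ 2 ≤ Y / ν + ν * Z := by linarith
  have h5 : |v1 x| ≤ (1/2) * (1/ν + ν * v1 x ^ 2) := by
    have : (1/ν + ν * v1 x ^ 2) - 2 * |v1 x| = (1 - ν * |v1 x|) ^ 2 / ν := by
      rw [← sq_abs (v1 x)]; field_simp; ring
    have h' : 0 ≤ (1 - ν * |v1 x|) ^ 2 / ν := by positivity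
    linarith
  have h6 : ν * v1 x ^ 2 ≤ Y + ν ^ 2 * Z := by
    have := mul_le_mul_of_nonneg_left h4 hν.le
    have e : ν * (Y / ν + ν * Z) = Y + ν ^ 2 * Z := by field_simp
    linarith
  linarith

lemma PerC2.w3_upper {v v1 v2 : ℝ → ℝ} (h : PerC2 v v1 v2) {ℓ b : ℝ} (hl : 0 < ℓ)
    (hb : ∀ x, |v1 x| ≤ b) :
    ∫ x in (0:ℝ)..1, |v (x + ℓ) - v x| ^ 3 ≤ ℓ ^ 3 * b * ∫ x in (0:ℝ)..1, v1 x ^ 2 := by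
  have c0 := h.c0
  have hb0 : 0 ≤ b := (abs_nonneg _).trans (hb 0)
  have h1 : ∫ x in (0:ℝ)..1, |v (x + ℓ) - v x| ^ 3
      ≤ ∫ x in (0:ℝ)..1, (ℓ * b) * (v (x + ℓ) - v x) ^ 2 := by
    refine intervalIntegral.integral_mono_on zero_le_one ?_ ?_ ?_
    · exact Continuous.intervalIntegrable (by fun_prop) _ _
    · exact Continuous.intervalIntegrable (by fun_prop) _ _
    · intro x _
      have : |v (x + ℓ) - v x| ≤ ℓ * b := by
        rw [incr_eq h.d1 h.c1]
        have := intervalIntegral.norm_integral_le_of_norm_le_const (a := x) (b := x + ℓ)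
          (f := v1) (C := b) (fun y _ => hb y)
        rw [Real.norm_eq_abs, add_sub_cancel_left, abs_of_pos hl] at this
        linarith
      rw [← sq_abs (v (x + ℓ) - v x), pow_succ' _ 2]
      exact mul_le_mul_of_nonneg_right this (by positivity)
  rw [intervalIntegral.integral_const_mul] at h1
  have := mul_le_mul_of_nonneg_left (h.w2_upper hl) (show 0 ≤ ℓ * b by positivity)
  nlinarith

lemma PerC2.incr_le {v v1 v2 : ℝ → ℝ} (h : PerC2 v v1 v2) {G : ℝ} (hG : ∀ x, v1 x ≤ G) {a b : ℝ}
    (hab : a ≤ b) : v b - v a ≤ G * (b - a) := by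
  have hd : Differentiable ℝ v := fun x => (h.d1 x).differentiableAt
  exact image_sub_le_mul_sub_of_deriv_le hd (fun x => by rw [(h.d1 x).deriv]; exact hG x) hab

lemma PerC2.sup0 {v v1 v2 : ℝ → ℝ} (h : PerC2 v v1 v2) {G : ℝ} (hG0 : 0 ≤ G) (hG : ∀ x, v1 x ≤ G)
    (hm : ∫ x in (0:ℝ)..1, v x = 0) (x : ℝ) : |v x| ≤ G := by
  have hz : ∀ y, ∃ z ∈ Icc y (y+1), v z = 0 := by
    intro y
    have hV : ∀ x, HasDerivAt (fun x => ∫ y in (0:ℝ)..x, v y) (v x) x := fun x =>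
      intervalIntegral.integral_hasDerivAt_right (h.c0.intervalIntegrable _ _)
        h.c0.stronglyMeasurable.stronglyMeasurableAtFilter h.c0.continuousAt
    obtain ⟨z, hz, hz'⟩ := exists_hasDerivAt_eq_zero (f' := v)
      (show y < y + 1 by linarith)
      (continuous_iff_continuousAt.2 fun x => (hV x).continuousAt).continuousOn
      (by
        have h1 := h.p0.intervalIntegral_add_eq y 0
        rw [zero_add, hm] at h1
        have h2 := intervalIntegral.integral_add_adjacent_intervals (μ := volume)
          (h.c0.intervalIntegrable 0 y) (h.c0.intervalIntegrable y (y+1))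
        linarith) (fun y _ => hV y)
    exact ⟨z, Ioo_subset_Icc_self hz, hz'⟩
  rw [abs_le]
  constructor
  · obtain ⟨z, hz, hz0⟩ := hz x
    have := h.incr_le hG hz.1
    have h2 := hz.2
    nlinarith
  · obtain ⟨z, hz, hz0⟩ := hz (x-1)
    have := h.incr_le hG (show z ≤ x by linarith [hz.2])
    have h2 := hz.1
    nlinarith

lemma PerC2.w_mean {v v1 v2 : ℝ → ℝ} (h : PerC2 v v1 v2) (ℓ : ℝ) :
    ∫ x in (0:ℝ)..1, (v (x + ℓ) - v x) = 0 := by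
  have c0 := h.c0
  rw [intervalIntegral.integral_sub (Continuous.intervalIntegrable (by fun_prop) _ _)
    (Continuous.intervalIntegrable (by fun_prop) _ _), per_shift h.p0, sub_self]

lemma PerC2.w1_upper {v v1 v2 : ℝ → ℝ} (h : PerC2 v v1 v2) {G ℓ : ℝ} (hl : 0 < ℓ) (hG0 : 0 ≤ G)
    (hG : ∀ x, v1 x ≤ G) : ∫ x in (0:ℝ)..1, |v (x + ℓ) - v x| ≤ 2 * G * ℓ := by
  have c0 := h.c0
  have h1 : ∫ x in (0:ℝ)..1, |v (x + ℓ) - v x|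
      ≤ ∫ x in (0:ℝ)..1, (2 * G * ℓ - (v (x + ℓ) - v x)) := by
    refine intervalIntegral.integral_mono_on zero_le_one
      (Continuous.intervalIntegrable (by fun_prop) _ _)
      (Continuous.intervalIntegrable (by fun_prop) _ _) ?_
    intro x _
    have := h.incr_le hG (show x ≤ x + ℓ by linarith)
    have hp : 0 ≤ G * ℓ := by positivity
    rw [abs_le]; constructor <;> nlinarith
  rw [intervalIntegral.integral_sub intervalIntegrable_const
    (Continuous.intervalIntegrable (by fun_prop) _ _), h.w_mean] at h1
  simpa using h1

noncomputable def dX (u : ℝ → ℝ → ℝ) : ℝ → ℝ → ℝ := fun t x => deriv (u t) x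

lemma Smo.dX {u : ℝ → ℝ → ℝ} (h : Smo u) : Smo (dX u) := h.dx

lemma Smo.mul {u v : ℝ → ℝ → ℝ} (h : Smo u) (k : Smo v) : Smo (fun t x => u t x * v t x) :=
  ContDiffOn.mul h k

lemma cont_sq {F : ℝ → ℝ → ℝ} (h : ContinuousOn (Function.uncurry F) HP) :
    ContinuousOn (Function.uncurry fun t x => F t x ^ 2) HP :=
  (h.pow 2).congr (fun _ _ => rfl)

lemma cont_mul2 {F G : ℝ → ℝ → ℝ} (h : ContinuousOn (Function.uncurry F) HP)
    (k : ContinuousOn (Function.uncurry G) HP) :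
    ContinuousOn (Function.uncurry fun t x => 2 * F t x * G t x) HP :=
  (((continuousOn_const (c := (2:ℝ))).mul h).mul k).congr (fun _ _ => rfl)

lemma per_deriv {v : ℝ → ℝ} (h : Function.Periodic v 1) : Function.Periodic (deriv v) 1 := by
  intro x
  have : (fun y => v (y + 1)) = v := funext h
  rw [← deriv_comp_add_const, this]

lemma int_per_deriv {g g' : ℝ → ℝ} (hg : Function.Periodic g 1)
    (hd : ∀ x, HasDerivAt g (g' x) x) (hc : Continuous g') : ∫ x in (0:ℝ)..1, g' x = 0 := by
  rw [← incr_eq hd hc]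
  have := hg 0
  rw [zero_add] at this
  rw [this, sub_self]

/-- right-hand side of the equation -/
noncomputable def rhs (f : ℝ → ℝ) (ν : ℝ) (u : ℝ → ℝ → ℝ) : ℝ → ℝ → ℝ :=
  fun t x => ν * dX (dX u) t x - deriv f (u t x) * dX u t x

section
variable {f : ℝ → ℝ} {σ ν : ℝ} {u : ℝ → ℝ → ℝ}

lemma IsBurgersSolution.smo (h : IsBurgersSolution f σ ν u) : Smo u := h.hu

lemma IsBurgersSolution.fp_smooth (h : IsBurgersSolution f σ ν u) :
    ContDiff ℝ (⊤ : ℕ∞) (deriv f) := (contDiff_infty_iff_deriv.1 h.hf).2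

lemma IsBurgersSolution.fpp_d (h : IsBurgersSolution f σ ν u) (y : ℝ) :
    HasDerivAt (deriv f) (deriv (deriv f) y) y :=
  (h.fp_smooth.differentiable (by simp) y).hasDerivAt

lemma IsBurgersSolution.fpp_ge (h : IsBurgersSolution f σ ν u) (y : ℝ) :
    σ ≤ deriv (deriv f) y := by
  have := h.hconv y
  rwa [iteratedDeriv_succ, iteratedDeriv_one] at this

lemma IsBurgersSolution.perC2 (h : IsBurgersSolution f σ ν u) {t : ℝ} (ht : 0 ≤ t) :
    PerC2 (u t) (dX u t) (dX (dX u) t) where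
  d1 := h.smo.hasDeriv_slice ht
  d2 := h.smo.dX.hasDeriv_slice ht
  c2 := (h.smo.dX.dX.slice ht).continuous
  p0 := h.hper t
  p1 := per_deriv (h.hper t)
  p2 := per_deriv (per_deriv (h.hper t))

lemma IsBurgersSolution.rhs_smo (h : IsBurgersSolution f σ ν u) : Smo (rhs f ν u) := by
  have h1 : Smo (fun t x => deriv f (u t x)) :=
    ContDiff.comp_contDiffOn (g := deriv f) h.fp_smooth h.smo
  have h2 : Smo (fun t x => ν * dX (dX u) t x) :=
    ContDiffOn.mul contDiffOn_const h.smo.dX.dX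
  exact ContDiffOn.sub h2 (h1.mul h.smo.dX)

lemma IsBurgersSolution.ut_eq (h : IsBurgersSolution f σ ν u) {t : ℝ} (ht : 0 < t) (x : ℝ) :
    deriv (fun s => u s x) t = rhs f ν u t x := by
  have := h.hpde t ht x
  simp only [rhs, dX]
  have e : deriv (dX u t) x = deriv (deriv (u t)) x := rfl
  rw [e]
  linarith

lemma IsBurgersSolution.ut (h : IsBurgersSolution f σ ν u) {t : ℝ} (ht : 0 < t) (x : ℝ) :
    HasDerivAt (fun s => u s x) (rhs f ν u t x) t := by
  rw [← h.ut_eq ht x]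
  exact (h.smo.hasDerivAt_t ht x).differentiableAt.hasDerivAt

lemma IsBurgersSolution.uxt (h : IsBurgersSolution f σ ν u) {t : ℝ} (ht : 0 < t) (x : ℝ) :
    HasDerivAt (fun s => dX u s x) (dX (rhs f ν u) t x) t := by
  have e : (fun y => deriv (fun s => u s y) t) = rhs f ν u t := funext (h.ut_eq ht)
  have := h.smo.comm ht x
  rw [e] at this
  exact this

lemma IsBurgersSolution.rhs_per (h : IsBurgersSolution f σ ν u) {t : ℝ} (ht : 0 ≤ t) :
    Function.Periodic (rhs f ν u t) 1 := by
  intro x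
  simp only [rhs, h.hper t x, (h.perC2 ht).p1 x, (h.perC2 ht).p2 x]

lemma IsBurgersSolution.energy (h : IsBurgersSolution f σ ν u) {t : ℝ} (ht : 0 < t) :
    HasDerivAt (fun s => ∫ x in (0:ℝ)..1, u s x ^ 2)
      (-(2 * ν) * ∫ x in (0:ℝ)..1, dX u t x ^ 2) t := by
  have hP := h.perC2 ht.le
  have c0 := hP.c0
  have c1 := hP.c1
  have c2 := hP.c2
  have cf := h.fp_smooth.continuous
  have h1 := hasDeriv_param (F := fun t x => u t x ^ 2) (F' := fun t x => 2 * u t x * rhs f ν u t x)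
    (cont_sq h.smo.cont) (cont_mul2 h.smo.cont h.rhs_smo.cont) ht
    (fun s hs x => by simpa using (h.ut hs x).fun_pow 2)
  refine h1.congr_deriv (Eq.symm ?_)
  have hΦ : ∀ y, HasDerivAt (fun y => ∫ s in (0:ℝ)..y, s * deriv f s) (y * deriv f y) y := fun y => by
    have hk : Continuous (fun s => s * deriv f s) := by fun_prop
    exact intervalIntegral.integral_hasDerivAt_right (hk.intervalIntegrable _ _)
      hk.stronglyMeasurable.stronglyMeasurableAtFilter hk.continuousAt
  have h2 := int_per_deriv
    (g := fun x => 2 * ν * (u t x * dX u t x) - 2 * (∫ s in (0:ℝ)..(u t x), s * deriv f s))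
    (g' := fun x => 2 * ν * (dX u t x * dX u t x + u t x * dX (dX u) t x)
      - 2 * (u t x * deriv f (u t x) * dX u t x))
    (fun x => by simp only [hP.p0 x, hP.p1 x])
    (fun x => by
      have hA := ((hP.d1 x).fun_mul (hP.d2 x)).const_mul (2 * ν)
      have hB := ((hΦ (u t x)).comp x (hP.d1 x)).const_mul 2
      exact hA.sub hB) (by fun_prop)
  have h3 : ∫ x in (0:ℝ)..1, 2 * u t x * rhs f ν u t x
      = ∫ x in (0:ℝ)..1, ((2 * ν * (dX u t x * dX u t x + u t x * dX (dX u) t x)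
      - 2 * (u t x * deriv f (u t x) * dX u t x)) - 2 * ν * dX u t x ^ 2) := by
    congr 1; funext x; simp only [rhs]; ring
  rw [h3, intervalIntegral.integral_sub (Continuous.intervalIntegrable (by fun_prop) _ _)
    (Continuous.intervalIntegrable (by fun_prop) _ _), h2, intervalIntegral.integral_const_mul]
  ring

lemma IsBurgersSolution.energy1 (h : IsBurgersSolution f σ ν u) {t : ℝ} (ht : 0 < t) :
    HasDerivAt (fun s => ∫ x in (0:ℝ)..1, dX u s x ^ 2)
      (∫ x in (0:ℝ)..1, -(2 * dX (dX u) t x * rhs f ν u t x)) t := by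
  have hP := h.perC2 ht.le
  have c0 := hP.c0
  have c1 := hP.c1
  have c2 := hP.c2
  have cf := h.fp_smooth.continuous
  have cr : Continuous (rhs f ν u t) := (h.rhs_smo.slice ht.le).continuous
  have cr' : Continuous (dX (rhs f ν u) t) := (h.rhs_smo.dX.slice ht.le).continuous
  have h1 := hasDeriv_param (F := fun t x => dX u t x ^ 2)
    (F' := fun t x => 2 * dX u t x * dX (rhs f ν u) t x)
    (cont_sq h.smo.dX.cont) (cont_mul2 h.smo.dX.cont h.rhs_smo.dX.cont) ht
    (fun s hs x => by simpa using (h.uxt hs x).fun_pow 2)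
  refine h1.congr_deriv (Eq.symm ?_)
  have h2 := int_per_deriv
    (g := fun x => 2 * (dX u t x * rhs f ν u t x))
    (g' := fun x => 2 * (dX (dX u) t x * rhs f ν u t x + dX u t x * dX (rhs f ν u) t x))
    (fun x => by simp only [hP.p1 x, h.rhs_per ht.le x])
    (fun x => ((hP.d2 x).fun_mul (h.rhs_smo.hasDeriv_slice ht.le x)).const_mul 2) (by fun_prop)
  have h3 : ∫ x in (0:ℝ)..1, -(2 * dX (dX u) t x * rhs f ν u t x)
      = ∫ x in (0:ℝ)..1, (2 * dX u t x * dX (rhs f ν u) t x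
        - 2 * (dX (dX u) t x * rhs f ν u t x + dX u t x * dX (rhs f ν u) t x)) := by
    congr 1; funext x; ring
  rw [h3, intervalIntegral.integral_sub (Continuous.intervalIntegrable (by fun_prop) _ _)
    (Continuous.intervalIntegrable (by fun_prop) _ _), h2, sub_zero]

lemma second_test {v : ℝ → ℝ} {x0 : ℝ} (hc : Continuous v) (hm : ∀ x, v x ≤ v x0) :
    deriv (deriv v) x0 ≤ 0 := by
  by_contra! hcon
  have hM : IsLocalMax v x0 := Eventually.of_forall hm
  have h2 := isLocalMin_of_deriv_deriv_pos hcon hM.deriv_eq_zero hc.continuousAt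
  have h3 : v =ᶠ[𝓝 x0] fun _ => v x0 := by
    filter_upwards [h2] with x hx using le_antisymm (hm x) hx
  have h4 : deriv v =ᶠ[𝓝 x0] fun _ => 0 := by
    have := h3.deriv
    simpa using this
  rw [h4.deriv_eq] at hcon
  simp at hcon

lemma left_max {φ : ℝ → ℝ} {d t : ℝ} (ht : 0 < t) (hd : HasDerivAt φ d t)
    (hm : ∀ s, 0 ≤ s → s ≤ t → φ s ≤ φ t) : 0 ≤ d := by
  have h1 := (hasDerivAt_iff_tendsto_slope.1 hd).mono_left
    (nhdsWithin_mono t (show Iio t ⊆ {t}ᶜ from fun x hx => ne_of_lt hx))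
  refine ge_of_tendsto h1 ?_
  filter_upwards [Ioo_mem_nhdsLT ht] with s hs
  rw [slope_def_field]
  exact div_nonneg_of_nonpos (by linarith [hm s hs.1.le hs.2.le]) (by linarith [hs.2])

lemma IsBurgersSolution.oleinik (h : IsBurgersSolution f σ ν u) {D : ℝ} (hD : 0 < D)
    (h0 : ∀ x, dX u 0 x ≤ D) {t : ℝ} (ht : 0 ≤ t) (x : ℝ) : dX u t x ≤ D / (1 + σ * D * t) := by
  have hσ := h.hσ
  by_contra! hcon
  have hgc : ContinuousOn (fun z : ℝ × ℝ => dX u z.1 z.2 - D / (1 + σ * D * z.1))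
      (Icc 0 t ×ˢ Icc 0 1) := by
    have hsub : Icc (0:ℝ) t ×ˢ Icc (0:ℝ) 1 ⊆ HP := fun z hz => ⟨hz.1.1, mem_univ _⟩
    refine ContinuousOn.sub (h.smo.dX.cont.mono hsub) ?_
    refine ContinuousOn.div continuousOn_const (by fun_prop) ?_
    intro z hz
    have := hz.1.1
    positivity
  obtain ⟨⟨t0, x0⟩, ⟨ht0, hx0⟩, hmax⟩ := (isCompact_Icc.prod isCompact_Icc).exists_isMaxOn
    ⟨(0, 0), ⟨⟨le_rfl, ht⟩, ⟨le_rfl, zero_le_one⟩⟩⟩ hgc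
  have hmax' : ∀ s, 0 ≤ s → s ≤ t → ∀ y, dX u s y - D / (1 + σ * D * s)
      ≤ dX u t0 x0 - D / (1 + σ * D * t0) := by
    intro s hs hst y
    have hp : dX u s (Int.fract y) = dX u s y := by
      have := (h.perC2 hs).p1.sub_zsmul_eq (x := y) ⌊y⌋
      rw [← this]; congr 1; rw [zsmul_one]; rfl
    rw [← hp]
    exact hmax (show (s, Int.fract y) ∈ Icc (0:ℝ) t ×ˢ Icc (0:ℝ) 1 from
      ⟨⟨hs, hst⟩, ⟨Int.fract_nonneg y, (Int.fract_lt_one y).le⟩⟩)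
  simp only [mem_Icc] at ht0
  have hpos : 0 < dX u t0 x0 - D / (1 + σ * D * t0) := by
    have := hmax' t ht le_rfl x
    linarith
  have ht0' : 0 < t0 := by
    rcases ht0.1.lt_or_eq with h1 | h1
    · exact h1
    · rw [← h1] at hpos
      have := h0 x0
      simp at hpos
      linarith
  have hP := h.perC2 ht0.1
  have hm : ∀ y, dX u t0 y ≤ dX u t0 x0 := fun y => by
    have := hmax' t0 ht0.1 ht0.2 y
    linarith
  have hv1 : dX (dX u) t0 x0 = 0 := by
    have hM : IsLocalMax (dX u t0) x0 := Eventually.of_forall hm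
    exact hM.deriv_eq_zero
  have hv2 : dX (dX (dX u)) t0 x0 ≤ 0 := second_test hP.c1 hm
  have hR : HasDerivAt (rhs f ν u t0) (ν * dX (dX (dX u)) t0 x0
      - (deriv (deriv f) (u t0 x0) * dX u t0 x0 * dX u t0 x0
        + deriv f (u t0 x0) * dX (dX u) t0 x0)) x0 := by
    have hA := (h.smo.dX.dX.hasDeriv_slice ht0.1 x0).const_mul ν
    have hB := ((h.fpp_d (u t0 x0)).comp x0 (hP.d1 x0)).fun_mul (hP.d2 x0)
    exact hA.sub hB
  have hg : HasDerivAt (fun s => D / (1 + σ * D * s)) (-(σ * (D / (1 + σ * D * t0)) ^ 2)) t0 := by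
    have hne : 1 + σ * D * t0 ≠ 0 := by positivity
    have hlin : HasDerivAt (fun s => 1 + σ * D * s) (σ * D) t0 := by
      simpa using ((hasDerivAt_id t0).const_mul (σ * D)).const_add 1
    have := (hasDerivAt_const t0 D).fun_div hlin hne
    refine this.congr_deriv ?_
    rw [div_pow]
    ring
  have hd := (h.uxt ht0' x0).sub hg
  have hge := left_max ht0' hd (fun s hs hst => hmax' s hs (hst.trans ht0.2) x0)
  have e : dX (rhs f ν u) t0 x0 = _ := hR.deriv
  rw [e, hv1] at hge
  set g := D / (1 + σ * D * t0) with hgdef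
  have hg0 : 0 < g := by positivity
  have h5 : g ^ 2 < dX u t0 x0 ^ 2 := by nlinarith
  have h6 : σ * dX u t0 x0 ^ 2 ≤ deriv (deriv f) (u t0 x0) * dX u t0 x0 ^ 2 :=
    mul_le_mul_of_nonneg_right (h.fpp_ge _) (sq_nonneg _)
  have h7 : ν * dX (dX (dX u)) t0 x0 ≤ 0 := mul_nonpos_of_nonneg_of_nonpos h.hν.le hv2
  nlinarith [mul_lt_mul_of_pos_left h5 hσ]

end

lemma sobLp_zero_one {v : ℝ → ℝ} (hv : Continuous v) :
    sobLp 0 1 v = ∫ x in (0:ℝ)..1, |v x| := by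
  rw [sobLp, iteratedDeriv_zero, toReal_eLpNorm hv.aestronglyMeasurable,
    lpNorm_one_eq_integral_norm hv.aestronglyMeasurable, intervalIntegral.integral_of_le zero_le_one]
  rfl

lemma sobLp_one_two {v : ℝ → ℝ} (hv : Continuous (deriv v)) :
    sobLp 1 2 v ^ 2 = ∫ x in (0:ℝ)..1, deriv v x ^ 2 := by
  rw [sobLp, iteratedDeriv_one, toReal_eLpNorm hv.aestronglyMeasurable,
    lpNorm_eq_integral_norm_rpow_toReal (by simp) (by simp) hv.aestronglyMeasurable,
    intervalIntegral.integral_of_le zero_le_one]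
  have e : ∀ x, ‖deriv v x‖ ^ (2 : ℝ≥0∞).toReal = deriv v x ^ 2 := by
    intro x; simp
  simp only [e]
  have h0 : 0 ≤ ∫ x in Ioc (0:ℝ) 1, deriv v x ^ 2 := integral_nonneg fun x => sq_nonneg _
  rw [← Real.rpow_natCast, ← Real.rpow_mul h0]
  simp

lemma sobLp_one_top {v : ℝ → ℝ} (hv : Continuous (deriv v)) (hp : Function.Periodic v 1) (x : ℝ) :
    |deriv v x| ≤ sobLp 1 ⊤ v := by
  obtain ⟨C, hC⟩ := isCompact_Icc.exists_bound_of_continuousOn (hv.continuousOn (s := Icc (0:ℝ) 1))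
  have hmem : MemLp (deriv v) ⊤ (volume.restrict (Ioc (0:ℝ) 1)) := by
    refine memLp_top_of_bound hv.aestronglyMeasurable C ?_
    filter_upwards [ae_restrict_mem measurableSet_Ioc] with x hx
    exact hC x (Ioc_subset_Icc_self hx)
  have h1 := ae_le_lpNorm_exponent_top hmem
  rw [← toReal_eLpNorm hv.aestronglyMeasurable] at h1
  have h2 : sobLp 1 ⊤ v = (eLpNorm (deriv v) ⊤ (volume.restrict (Ioc (0:ℝ) 1))).toReal := by
    rw [sobLp, iteratedDeriv_one]
  rw [← h2] at h1
  have h3 : EqOn (fun x => max |deriv v x| (sobLp 1 ⊤ v)) (fun _ => sobLp 1 ⊤ v) (Ioc 0 1) := by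
    refine Measure.eqOn_Ioc_of_ae_eq volume ?_ (by fun_prop) (by fun_prop)
    filter_upwards [h1] with x hx
    exact max_eq_right hx
  obtain ⟨y, hy, hxy⟩ := (per_deriv hp).exists_mem_Ioc zero_lt_one x 0
  rw [zero_add] at hy
  rw [hxy]
  have := h3 hy
  exact max_eq_right_iff.1 this

section
variable {f : ℝ → ℝ} {σ ν : ℝ} {u : ℝ → ℝ → ℝ}

lemma IsBurgersSolution.init (h : IsBurgersSolution f σ ν u) {D : ℝ} (hD : burgersD u = D) :
    0 < D ∧ (∀ x, dX u 0 x ≤ D) ∧ D⁻¹ ^ 2 ≤ ∫ x in (0:ℝ)..1, u 0 x ^ 2 := by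
  have hP := h.perC2 le_rfl
  have c0 := hP.c0
  have hpos : 0 < ∫ x in (0:ℝ)..1, |u 0 x| := by
    obtain ⟨x, hx⟩ := h.hinit
    obtain ⟨y, hy, hxy⟩ := hP.p0.exists_mem_Ico₀ zero_lt_one x
    rw [hxy] at hx
    exact intervalIntegral.integral_pos zero_lt_one (by fun_prop) (fun _ _ => abs_nonneg _)
      ⟨y, Ico_subset_Icc_self hy, abs_pos.2 hx⟩
  have hs := sobLp_zero_one c0
  have h1 : (∫ x in (0:ℝ)..1, |u 0 x|)⁻¹ ≤ D := by
    rw [← hs, ← hD]; exact le_max_left _ _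
  have hDpos : 0 < D := lt_of_lt_of_le (inv_pos.2 hpos) h1
  refine ⟨hDpos, fun x => ?_, ?_⟩
  · refine (le_abs_self _).trans ((sobLp_one_top hP.c1 hP.p0 x).trans ?_)
    rw [← hD]; exact le_max_right _ _
  · have h2 := cs_int c0 (zero_lt_one (α := ℝ))
    have h3 : D⁻¹ ≤ ∫ x in (0:ℝ)..1, |u 0 x| := inv_le_of_inv_le₀ hpos h1
    have h4 := pow_le_pow_left₀ (inv_pos.2 hDpos).le h3 2
    linarith

lemma IsBurgersSolution.mean' (h : IsBurgersSolution f σ ν u) {t : ℝ} (ht : 0 ≤ t) :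
    ∫ x in (0:ℝ)..1, u t x = 0 := by
  rw [intervalIntegral.integral_of_le zero_le_one]; exact h.hmean t ht

lemma IsBurgersSolution.Yc (h : IsBurgersSolution f σ ν u) :
    ContinuousOn (fun t => ∫ x in (0:ℝ)..1, dX u t x ^ 2) (Ici 0) :=
  cont_param (cont_sq h.smo.dX.cont) 0 1

lemma IsBurgersSolution.Zc (h : IsBurgersSolution f σ ν u) :
    ContinuousOn (fun t => ∫ x in (0:ℝ)..1, dX (dX u) t x ^ 2) (Ici 0) :=
  cont_param (cont_sq h.smo.dX.dX.cont) 0 1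

lemma ii_of {g : ℝ → ℝ} (hg : ContinuousOn g (Ici 0)) {a b : ℝ} (ha : 0 ≤ a) (hb : 0 ≤ b) :
    IntervalIntegrable g volume a b := by
  refine ContinuousOn.intervalIntegrable (hg.mono fun x hx => ?_)
  exact le_trans (le_min ha hb) hx.1

lemma IsBurgersSolution.I1 (h : IsBurgersSolution f σ ν u) {D Ct T1 T2 : ℝ}
    (hD : burgersD u = D) (hCt : 0 < Ct)
    (hY : ∀ t, 0 ≤ t → ∫ x in (0:ℝ)..1, dX u t x ^ 2 ≤ Ct * ν⁻¹)
    (hT1 : T1 = (D ^ 2)⁻¹ * Ct⁻¹ / 4) (hT12 : T1 < T2) (hT2 : 2 * D * σ⁻¹ ≤ T2) :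
    (D⁻¹ ^ 2 / 8) / ν ≤ ∫ t in T1..T2, ∫ x in (0:ℝ)..1, dX u t x ^ 2 := by
  obtain ⟨hDp, hD1, hE0⟩ := h.init hD
  have hν := h.hν
  have hσ := h.hσ
  have hT1p : 0 < T1 := by rw [hT1]; positivity
  have hEc : ContinuousOn (fun t => ∫ x in (0:ℝ)..1, u t x ^ 2) (Ici 0) :=
    cont_param (cont_sq h.smo.cont) 0 1
  have hE1 : D⁻¹ ^ 2 / 2 ≤ ∫ x in (0:ℝ)..1, u T1 x ^ 2 := by
    have := (convex_Ici (0:ℝ)).mul_sub_le_image_sub_of_le_deriv (C := -(2 * Ct)) hEc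
      (by
        intro t ht
        rw [interior_Ici] at ht
        exact (h.energy ht).differentiableAt.differentiableWithinAt)
      (by
        intro t ht
        rw [interior_Ici] at ht
        rw [(h.energy ht).deriv]
        have h1 := mul_le_mul_of_nonneg_left (hY t (le_of_lt ht)) (show 0 ≤ 2 * ν by positivity)
        have h2 : 2 * ν * (Ct * ν⁻¹) = 2 * Ct := by field_simp
        linarith) 0 self_mem_Ici T1 hT1p.le hT1p.le
    have h3 : 2 * Ct * T1 = D⁻¹ ^ 2 / 2 := by
      rw [hT1]; field_simp; norm_num
    nlinarith
  have hE2 : ∫ x in (0:ℝ)..1, u T2 x ^ 2 ≤ D⁻¹ ^ 2 / 4 := by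
    have hT2p : 0 < T2 := hT1p.trans hT12
    have hb : ∀ x, |u T2 x| ≤ D⁻¹ / 2 := by
      intro x
      refine ((h.perC2 hT2p.le).sup0 (by positivity) (h.oleinik hDp hD1 hT2p.le)
        (h.mean' hT2p.le) x).trans ?_
      rw [div_le_iff₀ (by positivity)]
      have : 2 * D ≤ σ * T2 := by
        have := mul_le_mul_of_nonneg_left hT2 hσ.le
        have e : σ * (2 * D * σ⁻¹) = 2 * D := by field_simp
        linarith
      have e : D⁻¹ / 2 * (1 + σ * D * T2) = D⁻¹ / 2 + σ * T2 / 2 := by field_simp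
      have : 0 < D⁻¹ := by positivity
      rw [e]; linarith
    have c0 := (h.perC2 hT2p.le).c0
    have := intervalIntegral.integral_mono_on (μ := volume) (zero_le_one (α := ℝ))
      (f := fun x => u T2 x ^ 2) (g := fun _ => D⁻¹ ^ 2 / 4)
      (Continuous.intervalIntegrable (by fun_prop) _ _) intervalIntegrable_const (fun x _ => by
        rw [← sq_abs]
        have := pow_le_pow_left₀ (abs_nonneg _) (hb x) 2
        nlinarith)
    simpa using this
  have hF := intervalIntegral.integral_eq_sub_of_hasDerivAt (a := T1) (b := T2)
    (f := fun t => ∫ x in (0:ℝ)..1, u t x ^ 2)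
    (f' := fun t => -(2 * ν) * ∫ x in (0:ℝ)..1, dX u t x ^ 2)
    (fun t ht => h.energy (by rw [uIcc_of_le hT12.le] at ht; linarith [ht.1]))
    ((ii_of h.Yc hT1p.le (by linarith)).const_mul _)
  rw [intervalIntegral.integral_const_mul] at hF
  rw [div_le_iff₀ hν]
  linarith

lemma IsBurgersSolution.I2 (h : IsBurgersSolution f σ ν u) {D Ct T1 T2 M : ℝ}
    (hD : burgersD u = D) (hCt : 0 < Ct) (hν1 : ν ≤ 1)
    (hY : ∀ t, 0 ≤ t → ∫ x in (0:ℝ)..1, dX u t x ^ 2 ≤ Ct * ν⁻¹)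
    (hT1p : 0 < T1) (hT12 : T1 < T2) (hM : ∀ y, |y| ≤ D → |deriv f y| ≤ M) :
    ∫ t in T1..T2, ∫ x in (0:ℝ)..1, dX (dX u) t x ^ 2
      ≤ (Ct * (1 + M ^ 2 * (T2 - T1))) / ν ^ 3 := by
  obtain ⟨hDp, hD1, -⟩ := h.init hD
  have hν := h.hν
  have hσ := h.hσ
  have hrc : ContinuousOn (fun t => ∫ x in (0:ℝ)..1, -(2 * dX (dX u) t x * rhs f ν u t x)) (Ici 0) :=
    cont_param ((cont_mul2 h.smo.dX.dX.cont h.rhs_smo.cont).neg.congr (fun _ _ => rfl)) 0 1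
  have hub : ∀ t, 0 ≤ t → ∀ x, |u t x| ≤ D := by
    intro t ht x
    refine ((h.perC2 ht).sup0 (by positivity) (h.oleinik hDp hD1 ht)
        (h.mean' ht) x).trans ?_
    refine div_le_self hDp.le ?_
    have : 0 ≤ σ * D * t := by positivity
    linarith
  have hF := intervalIntegral.integral_eq_sub_of_hasDerivAt (a := T1) (b := T2)
    (f := fun t => ∫ x in (0:ℝ)..1, dX u t x ^ 2)
    (fun t ht => h.energy1 (by rw [uIcc_of_le hT12.le] at ht; linarith [ht.1]))
    (ii_of hrc hT1p.le (by linarith))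
  have hmono : ∫ t in T1..T2, ∫ x in (0:ℝ)..1, -(2 * dX (dX u) t x * rhs f ν u t x)
      ≤ ∫ t in T1..T2, (M ^ 2 / ν * (Ct * ν⁻¹) - ν * ∫ x in (0:ℝ)..1, dX (dX u) t x ^ 2) := by
    refine intervalIntegral.integral_mono_on hT12.le (ii_of hrc hT1p.le (by linarith)) ?_ ?_
    · exact ii_of (continuousOn_const.sub (continuousOn_const.mul h.Zc)) hT1p.le (by linarith)
    intro t ht
    have ht0 : 0 ≤ t := by linarith [ht.1]
    have hP := h.perC2 ht0
    have c0 := hP.c0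
    have c1 := hP.c1
    have c2 := hP.c2
    have cr : Continuous (rhs f ν u t) := (h.rhs_smo.slice ht0).continuous
    have h1 := intervalIntegral.integral_mono_on (μ := volume) (zero_le_one (α := ℝ))
      (f := fun x => -(2 * dX (dX u) t x * rhs f ν u t x))
      (g := fun x => M ^ 2 / ν * dX u t x ^ 2 - ν * dX (dX u) t x ^ 2)
      (Continuous.intervalIntegrable (by fun_prop) _ _)
      (Continuous.intervalIntegrable (by fun_prop) _ _) (fun x _ => by
        have hm := hM _ (hub t ht0 x)
        have hm2 : deriv f (u t x) ^ 2 ≤ M ^ 2 := by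
          rw [← sq_abs]; exact pow_le_pow_left₀ (abs_nonneg _) hm 2
        simp only [rhs]
        set a := deriv f (u t x)
        set p := dX u t x
        set q := dX (dX u) t x
        have e : (a ^ 2 / ν * p ^ 2 - ν * q ^ 2) - (-(2 * q * (ν * q - a * p)))
            = (a * p - ν * q) ^ 2 / ν := by field_simp; ring
        have e2 : 0 ≤ (a * p - ν * q) ^ 2 / ν := by positivity
        have e3 : a ^ 2 / ν * p ^ 2 ≤ M ^ 2 / ν * p ^ 2 := by gcongr
        linarith)
    rw [intervalIntegral.integral_sub (Continuous.intervalIntegrable (by fun_prop) _ _)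
      (Continuous.intervalIntegrable (by fun_prop) _ _), intervalIntegral.integral_const_mul,
      intervalIntegral.integral_const_mul] at h1
    have h2 := mul_le_mul_of_nonneg_left (hY t ht0) (show 0 ≤ M ^ 2 / ν by positivity)
    linarith
  rw [hF, intervalIntegral.integral_sub intervalIntegrable_const
    ((ii_of h.Zc hT1p.le (by linarith)).const_mul _),
    intervalIntegral.integral_const_mul (μ := volume) ν,
    intervalIntegral.integral_const, smul_eq_mul] at hmono
  have hY2 : 0 ≤ ∫ x in (0:ℝ)..1, dX u T2 x ^ 2 :=
    intervalIntegral.integral_nonneg zero_le_one fun _ _ => sq_nonneg _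
  have hY1 := hY T1 hT1p.le
  set I := ∫ t in T1..T2, ∫ x in (0:ℝ)..1, dX (dX u) t x ^ 2
  have h5 : ν * I ≤ Ct * ν⁻¹ + (T2 - T1) * (M ^ 2 / ν * (Ct * ν⁻¹)) := by linarith
  rw [le_div_iff₀ (by positivity)]
  have h6 := mul_le_mul_of_nonneg_left h5 (show 0 ≤ ν ^ 2 by positivity)
  have e : ν ^ 2 * (Ct * ν⁻¹ + (T2 - T1) * (M ^ 2 / ν * (Ct * ν⁻¹)))
      = Ct * ν + (T2 - T1) * M ^ 2 * Ct := by field_simp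
  nlinarith

end

/-- space-time integral -/
noncomputable def dI (T1 T2 : ℝ) (F : ℝ → ℝ → ℝ) : ℝ := ∫ t in T1..T2, ∫ x in (0:ℝ)..1, F t x

lemma dI_le {F G H : ℝ → ℝ → ℝ} (hF : ContinuousOn (Function.uncurry F) HP)
    (hG : ContinuousOn (Function.uncurry G) HP) (hH : ContinuousOn (Function.uncurry H) HP)
    {T1 T2 a b : ℝ} (hT1 : 0 ≤ T1) (hT : T1 ≤ T2)
    (hle : ∀ t, 0 ≤ t → ∀ x, F t x ≤ a * G t x + b * H t x) :
    dI T1 T2 F ≤ a * dI T1 T2 G + b * dI T1 T2 H := by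
  have hT2 : 0 ≤ T2 := hT1.trans hT
  have iF := ii_of (cont_param hF 0 1) hT1 hT2
  have iG := (ii_of (cont_param hG 0 1) hT1 hT2).const_mul a
  have iH := (ii_of (cont_param hH 0 1) hT1 hT2).const_mul b
  unfold dI
  rw [← intervalIntegral.integral_const_mul (μ := volume) a,
    ← intervalIntegral.integral_const_mul (μ := volume) b, ← intervalIntegral.integral_add iG iH]
  refine intervalIntegral.integral_mono_on hT iF (iG.add iH) fun t ht => ?_
  have ht0 : 0 ≤ t := hT1.trans ht.1
  have jF := (cont_slice hF ht0).intervalIntegrable (μ := volume) 0 1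
  have jG := ((cont_slice hG ht0).intervalIntegrable (μ := volume) 0 1).const_mul a
  have jH := ((cont_slice hH ht0).intervalIntegrable (μ := volume) 0 1).const_mul b
  rw [← intervalIntegral.integral_const_mul (μ := volume) a,
    ← intervalIntegral.integral_const_mul (μ := volume) b, ← intervalIntegral.integral_add jG jH]
  exact intervalIntegral.integral_mono_on zero_le_one jF (jG.add jH) fun x _ => hle t ht0 x

/-- increments -/
def inc (u : ℝ → ℝ → ℝ) (ℓ : ℝ) : ℝ → ℝ → ℝ := fun t x => u t (x + ℓ) - u t x

noncomputable def incP (u : ℝ → ℝ → ℝ) (ℓ p : ℝ) : ℝ → ℝ → ℝ := fun t x => |inc u ℓ t x| ^ p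

lemma structFun_eq (T1 T2 : ℝ) (u : ℝ → ℝ → ℝ) (p ℓ : ℝ) :
    structFun T1 T2 u p ℓ = (T2 - T1)⁻¹ * dI T1 T2 (incP u ℓ p) := by
  unfold structFun timeAvg dI incP inc
  simp only [intervalIntegral.integral_of_le (zero_le_one (α := ℝ))]

section
variable {f : ℝ → ℝ} {σ ν : ℝ} {u : ℝ → ℝ → ℝ}

lemma IsBurgersSolution.inc_cont (h : IsBurgersSolution f σ ν u) (ℓ : ℝ) :
    ContinuousOn (Function.uncurry (inc u ℓ)) HP := by
  have h1 : ContinuousOn (fun z : ℝ × ℝ => Function.uncurry u (z.1, z.2 + ℓ)) HP :=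
    h.smo.cont.comp (by fun_prop) (fun z hz => ⟨hz.1, mem_univ _⟩)
  exact (h1.sub h.smo.cont).congr (fun _ _ => rfl)

lemma IsBurgersSolution.incP_cont (h : IsBurgersSolution f σ ν u) (ℓ : ℝ) {p : ℝ} (hp : 0 ≤ p) :
    ContinuousOn (Function.uncurry (incP u ℓ p)) HP := by
  have := (h.inc_cont ℓ).abs.rpow_const (p := p) (fun _ _ => Or.inr hp)
  exact this.congr (fun _ _ => rfl)

lemma IsBurgersSolution.L2 (h : IsBurgersSolution f σ ν u) {ℓ α β T1 T2 : ℝ} (hl : 0 < ℓ)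
    (hT1 : 0 ≤ T1) (hT : T1 ≤ T2)
    (hI1 : α / ν ≤ ∫ t in T1..T2, ∫ x in (0:ℝ)..1, dX u t x ^ 2)
    (hI2 : ∫ t in T1..T2, ∫ x in (0:ℝ)..1, dX (dX u) t x ^ 2 ≤ β / ν ^ 3)
    (hlν : 4 * β * ℓ ^ 2 ≤ α * ν ^ 2) :
    α / 4 * (ℓ ^ 2 / ν) ≤ dI T1 T2 (incP u ℓ 2) := by
  have hν := h.hν
  have hT2 : 0 ≤ T2 := hT1.trans hT
  have iY := (ii_of h.Yc hT1 hT2).const_mul (ℓ ^ 2 / 2)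
  have iZ := (ii_of h.Zc hT1 hT2).const_mul (ℓ ^ 4)
  have iW := ii_of (cont_param (h.incP_cont ℓ (p := 2) (by norm_num)) 0 1) hT1 hT2
  have h1 := intervalIntegral.integral_mono_on hT (iY.sub iZ) iW (fun t ht => by
    have := (h.perC2 (hT1.trans ht.1)).w2_lower hl
    simpa [incP, inc] using this)
  rw [intervalIntegral.integral_sub iY iZ, intervalIntegral.integral_const_mul (μ := volume) (ℓ ^ 2 / 2),
    intervalIntegral.integral_const_mul (μ := volume) (ℓ ^ 4)] at h1
  have h2 := mul_le_mul_of_nonneg_left hI1 (show 0 ≤ ℓ ^ 2 / 2 by positivity)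
  have h3 := mul_le_mul_of_nonneg_left hI2 (show 0 ≤ ℓ ^ 4 by positivity)
  have h4 : ℓ ^ 4 * (β / ν ^ 3) ≤ α / 4 * (ℓ ^ 2 / ν) := by
    have e : α / 4 * (ℓ ^ 2 / ν) - ℓ ^ 4 * (β / ν ^ 3)
        = (ℓ ^ 2 / (4 * ν ^ 3)) * (α * ν ^ 2 - 4 * β * ℓ ^ 2) := by field_simp
    have : 0 ≤ (ℓ ^ 2 / (4 * ν ^ 3)) * (α * ν ^ 2 - 4 * β * ℓ ^ 2) :=
      mul_nonneg (by positivity) (by linarith)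
    linarith
  have e5 : ℓ ^ 2 / 2 * (α / ν) = 2 * (α / 4 * (ℓ ^ 2 / ν)) := by ring
  unfold dI
  linarith

lemma IsBurgersSolution.U3 (h : IsBurgersSolution f σ ν u) {ℓ β T1 T2 Ct : ℝ} (hl : 0 < ℓ)
    (hT1 : 0 ≤ T1) (hT : T1 ≤ T2) (hCt : 0 < Ct)
    (hY : ∀ t, 0 ≤ t → ∫ x in (0:ℝ)..1, dX u t x ^ 2 ≤ Ct * ν⁻¹)
    (hI2 : ∫ t in T1..T2, ∫ x in (0:ℝ)..1, dX (dX u) t x ^ 2 ≤ β / ν ^ 3) :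
    dI T1 T2 (incP u ℓ 3) ≤ (Ct * (((T2 - T1) * (1 + Ct) + β) / 2)) * (ℓ ^ 3 / ν ^ 2) := by
  have hν := h.hν
  have hT2 : 0 ≤ T2 := hT1.trans hT
  have iZ := (ii_of h.Zc hT1 hT2).const_mul (ℓ ^ 3 * Ct / ν * (ν ^ 2 / 2))
  have iW := ii_of (cont_param (h.incP_cont ℓ (p := 3) (by norm_num)) 0 1) hT1 hT2
  have h1 := intervalIntegral.integral_mono_on hT iW
    ((intervalIntegrable_const (c := ℓ ^ 3 * Ct / ν * ((1 + Ct) / (2 * ν)))).add iZ) (fun t ht => by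
    have ht0 := hT1.trans ht.1
    have hP := h.perC2 ht0
    have h2 := hP.w3_upper hl (hP.sup1 hν)
    have hy := hY t ht0
    have hZ : 0 ≤ ∫ x in (0:ℝ)..1, dX (dX u) t x ^ 2 :=
      intervalIntegral.integral_nonneg zero_le_one fun _ _ => sq_nonneg _
    have hY0 : 0 ≤ ∫ x in (0:ℝ)..1, dX u t x ^ 2 :=
      intervalIntegral.integral_nonneg zero_le_one fun _ _ => sq_nonneg _
    have e : ∫ x in (0:ℝ)..1, incP u ℓ 3 t x = ∫ x in (0:ℝ)..1, |u t (x + ℓ) - u t x| ^ 3 := by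
      congr 1; funext x
      simp only [incP, inc]
      norm_cast
    rw [e]
    refine h2.trans ?_
    set Y := ∫ x in (0:ℝ)..1, dX u t x ^ 2
    set Z := ∫ x in (0:ℝ)..1, dX (dX u) t x ^ 2
    calc ℓ ^ 3 * (1 / 2 * (1 / ν + Y + ν ^ 2 * Z)) * Y
        ≤ ℓ ^ 3 * (1 / 2 * (1 / ν + Ct * ν⁻¹ + ν ^ 2 * Z)) * (Ct * ν⁻¹) := by gcongr
      _ = ℓ ^ 3 * Ct / ν * ((1 + Ct) / (2 * ν)) + ℓ ^ 3 * Ct / ν * (ν ^ 2 / 2) * Z := by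
          field_simp)
  rw [intervalIntegral.integral_add intervalIntegrable_const iZ,
    intervalIntegral.integral_const_mul (μ := volume) (ℓ ^ 3 * Ct / ν * (ν ^ 2 / 2)),
    intervalIntegral.integral_const, smul_eq_mul] at h1
  have h3 := mul_le_mul_of_nonneg_left hI2
    (show 0 ≤ ℓ ^ 3 * Ct / ν * (ν ^ 2 / 2) by positivity)
  refine h1.trans ((add_le_add_right h3 _).trans (le_of_eq ?_))
  field_simp
  try ring

lemma IsBurgersSolution.U1 (h : IsBurgersSolution f σ ν u) {ℓ D T1 T2 : ℝ} (hl : 0 < ℓ)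
    (hT1 : 0 ≤ T1) (hT : T1 ≤ T2) (hDp : 0 < D) (hG : ∀ t, 0 ≤ t → ∀ x, dX u t x ≤ D) :
    dI T1 T2 (incP u ℓ 1) ≤ 2 * D * (T2 - T1) * ℓ := by
  have hT2 : 0 ≤ T2 := hT1.trans hT
  have iW := ii_of (cont_param (h.incP_cont ℓ (p := 1) (by norm_num)) 0 1) hT1 hT2
  have h1 := intervalIntegral.integral_mono_on hT iW
    (intervalIntegrable_const (c := 2 * D * ℓ)) (fun t ht => by
    have ht0 := hT1.trans ht.1
    have := (h.perC2 ht0).w1_upper hl hDp.le (hG t ht0)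
    simpa [incP, inc] using this)
  rw [intervalIntegral.integral_const, smul_eq_mul] at h1
  unfold dI
  linarith

lemma young_lo {w K p : ℝ} (hw : 0 ≤ w) (hK : 0 < K) (hp1 : 1 ≤ p) (hp2 : p ≤ 2) :
    w ^ (2:ℝ) ≤ K ^ (2 - p) * w ^ p + K⁻¹ * w ^ (3:ℝ) := by
  rcases hw.eq_or_lt with rfl | hw
  · simp [Real.zero_rpow (show p ≠ 0 by linarith)]
  rcases le_total w K with hle | hle
  · have h1 : w ^ (2:ℝ) = w ^ (2 - p) * w ^ p := by
      rw [← Real.rpow_add hw]; congr 1; ring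
    have h2 : w ^ (2 - p) ≤ K ^ (2 - p) := Real.rpow_le_rpow hw.le hle (by linarith)
    have h3 := mul_le_mul_of_nonneg_right h2 (show 0 ≤ w ^ p by positivity)
    have h4 : 0 ≤ K⁻¹ * w ^ (3:ℝ) := by positivity
    linarith
  · have h1 : w ^ (3:ℝ) = w * w ^ (2:ℝ) := by
      rw [show (3:ℝ) = 1 + 2 by norm_num, Real.rpow_add hw, Real.rpow_one]
    have h2 : 1 ≤ K⁻¹ * w := by
      rw [inv_mul_eq_div, le_div_iff₀ hK]; linarith
    have h3 := mul_le_mul_of_nonneg_right h2 (show 0 ≤ w ^ (2:ℝ) by positivity)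
    have h4 : 0 ≤ K ^ (2 - p) * w ^ p := by positivity
    rw [h1]
    linarith

lemma young_hi {w K p : ℝ} (hw : 0 ≤ w) (hK : 0 < K) (hp2 : 2 ≤ p) :
    w ^ (2:ℝ) ≤ K ^ (2 - p) * w ^ p + K * w ^ (1:ℝ) := by
  rcases hw.eq_or_lt with rfl | hw
  · simp [Real.zero_rpow (show p ≠ 0 by linarith)]
  rcases le_total w K with hle | hle
  · have h1 : w ^ (2:ℝ) = w * w ^ (1:ℝ) := by
      rw [Real.rpow_two, Real.rpow_one]; ring
    have h3 := mul_le_mul_of_nonneg_right hle (show 0 ≤ w ^ (1:ℝ) by positivity)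
    have h4 : 0 ≤ K ^ (2 - p) * w ^ p := by positivity
    exact (h1.le.trans h3).trans (le_add_of_nonneg_left h4)
  · have h1 : w ^ (2:ℝ) = w ^ (2 - p) * w ^ p := by
      rw [← Real.rpow_add hw]; congr 1; ring
    have h2 : w ^ (2 - p) ≤ K ^ (2 - p) := Real.rpow_le_rpow_of_nonpos hK hle (by linarith)
    have h3 := mul_le_mul_of_nonneg_right h2 (show 0 ≤ w ^ p by positivity)
    have h4 : 0 ≤ K * w ^ (1:ℝ) := by positivity
    linarith

lemma young_01 {w K p : ℝ} (hK : 0 < K) (hw : w ≤ K) (hp0 : 0 ≤ p) (hp1 : p ≤ 1) :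
    |w| ^ (1:ℝ) ≤ 2 * K ^ (1 - p) * |w| ^ p + (-1) * w := by
  rw [Real.rpow_one]
  have h4 : 0 ≤ 2 * K ^ (1 - p) * |w| ^ p := by positivity
  rcases le_or_gt w 0 with hw0 | hw0
  · rw [abs_of_nonpos hw0] at *; linarith
  · rw [abs_of_pos hw0] at *
    have h1 : w = w ^ (1 - p) * w ^ p := by
      rw [← Real.rpow_add hw0]; simp
    have h2 : w ^ (1 - p) ≤ K ^ (1 - p) := Real.rpow_le_rpow hw0.le hw (by linarith)
    have h3 := mul_le_mul_of_nonneg_right h2 (show 0 ≤ w ^ p by positivity)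
    linarith

lemma scale_id {ℓ A p : ℝ} (hl : 0 < ℓ) (hν : 0 < ν) (hA : 0 < A) :
    ((A * (ℓ / ν)) ^ (2 - p)) * (A ^ (p - 2) * (ℓ ^ p * ν ^ (-(p - 1)))) = ℓ ^ 2 / ν := by
  have e1 : A ^ (p - 2) = (A ^ (2 - p))⁻¹ := by
    rw [← Real.rpow_neg hA.le]; congr 1; ring
  have e2 : ℓ ^ (2:ℕ) = ℓ ^ (2 - p) * ℓ ^ p := by
    rw [← Real.rpow_add hl, ← Real.rpow_natCast]; congr 1; push_cast; ring
  have e3 : ν ^ (-(p - 1)) = ν ^ (2 - p) * ν⁻¹ := by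
    rw [← Real.rpow_neg_one, ← Real.rpow_add hν]; congr 1; ring
  rw [Real.mul_rpow hA.le (by positivity), Real.div_rpow hl.le hν.le, e1, e2, e3]
  have := Real.rpow_pos_of_pos hA (2 - p)
  have := Real.rpow_pos_of_pos hν (2 - p)
  field_simp

lemma final_mid (h : IsBurgersSolution f σ ν u) {ℓ α Γ T1 T2 p : ℝ} (hl : 0 < ℓ)
    (hT1 : 0 ≤ T1) (hT : T1 ≤ T2) (hα : 0 < α) (hΓ : 0 < Γ)
    (hL : α / 4 * (ℓ ^ 2 / ν) ≤ dI T1 T2 (incP u ℓ 2))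
    (hU : dI T1 T2 (incP u ℓ 3) ≤ Γ * (ℓ ^ 3 / ν ^ 2)) (hp1 : 1 ≤ p) (hp2 : p ≤ 2) :
    α / 8 * (8 * Γ / α) ^ (p - 2) * (ℓ ^ p * ν ^ (-(p - 1))) ≤ dI T1 T2 (incP u ℓ p) := by
  have hν := h.hν
  set A := 8 * Γ / α with hA
  have hAp : 0 < A := by positivity
  set K := A * (ℓ / ν) with hK
  have hKp : 0 < K := by positivity
  have h1 := dI_le (h.incP_cont ℓ (p := 2) (by norm_num)) (h.incP_cont ℓ (p := p) (by linarith))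
    (h.incP_cont ℓ (p := 3) (by norm_num)) (a := K ^ (2 - p)) (b := K⁻¹) hT1 hT
    (fun t _ x => young_lo (abs_nonneg _) hKp hp1 hp2)
  have h2 := mul_le_mul_of_nonneg_left hU (inv_pos.2 hKp).le
  have e2 : K⁻¹ * (Γ * (ℓ ^ 3 / ν ^ 2)) = α / 8 * (ℓ ^ 2 / ν) := by
    rw [hK, hA]; field_simp
  have h3 : α / 8 * (ℓ ^ 2 / ν) ≤ K ^ (2 - p) * dI T1 T2 (incP u ℓ p) := by linarith
  rw [← scale_id (p := p) hl hν hAp, ← hK] at h3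
  have hKq : 0 < K ^ (2 - p) := by positivity
  refine le_of_mul_le_mul_left ?_ hKq
  linarith

lemma final_hi (h : IsBurgersSolution f σ ν u) {ℓ α Γ T1 T2 p : ℝ} (hl : 0 < ℓ)
    (hT1 : 0 ≤ T1) (hT : T1 ≤ T2) (hα : 0 < α) (hΓ : 0 < Γ)
    (hL : α / 4 * (ℓ ^ 2 / ν) ≤ dI T1 T2 (incP u ℓ 2))
    (hU : dI T1 T2 (incP u ℓ 1) ≤ Γ * ℓ) (hp2 : 2 ≤ p) :
    α / 8 * (α / (8 * Γ)) ^ (p - 2) * (ℓ ^ p * ν ^ (-(p - 1))) ≤ dI T1 T2 (incP u ℓ p) := by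
  have hν := h.hν
  set A := α / (8 * Γ) with hA
  have hAp : 0 < A := by positivity
  set K := A * (ℓ / ν) with hK
  have hKp : 0 < K := by positivity
  have h1 := dI_le (h.incP_cont ℓ (p := 2) (by norm_num)) (h.incP_cont ℓ (p := p) (by linarith))
    (h.incP_cont ℓ (p := 1) (by norm_num)) (a := K ^ (2 - p)) (b := K) hT1 hT
    (fun t _ x => young_hi (abs_nonneg _) hKp hp2)
  have h2 := mul_le_mul_of_nonneg_left hU hKp.le
  have e2 : K * (Γ * ℓ) = α / 8 * (ℓ ^ 2 / ν) := by
    rw [hK, hA]; field_simp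
  have h3 : α / 8 * (ℓ ^ 2 / ν) ≤ K ^ (2 - p) * dI T1 T2 (incP u ℓ p) := by linarith
  rw [← scale_id (p := p) hl hν hAp, ← hK] at h3
  have hKq : 0 < K ^ (2 - p) := by positivity
  refine le_of_mul_le_mul_left ?_ hKq
  linarith

lemma final_lo (h : IsBurgersSolution f σ ν u) {ℓ D c T1 T2 p : ℝ} (hl : 0 < ℓ)
    (hT1 : 0 ≤ T1) (hT : T1 ≤ T2) (hDp : 0 < D) (hG : ∀ t, 0 ≤ t → ∀ x, dX u t x ≤ D)
    (hL : c * ℓ ≤ dI T1 T2 (incP u ℓ 1)) (hp0 : 0 ≤ p) (hp1 : p ≤ 1) :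
    c / (2 * D ^ (1 - p)) * ℓ ^ p ≤ dI T1 T2 (incP u ℓ p) := by
  have hK : 0 < D * ℓ := by positivity
  have h1 := dI_le (h.incP_cont ℓ (p := 1) (by norm_num)) (h.incP_cont ℓ hp0)
    (h.inc_cont ℓ) (a := 2 * (D * ℓ) ^ (1 - p)) (b := -1) hT1 hT
    (fun t ht x => young_01 hK (by
      have := (h.perC2 ht).incr_le (hG t ht) (show x ≤ x + ℓ by linarith)
      rw [add_sub_cancel_left] at this
      exact this) hp0 hp1)
  have h0 : dI T1 T2 (inc u ℓ) = 0 := by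
    unfold dI
    have : ∫ t in T1..T2, ∫ x in (0:ℝ)..1, inc u ℓ t x = ∫ t in T1..T2, (0:ℝ) := by
      refine intervalIntegral.integral_congr fun t ht => ?_
      rw [uIcc_of_le hT] at ht
      exact (h.perC2 (hT1.trans ht.1)).w_mean ℓ
    rw [this]; simp
  rw [h0] at h1
  have e1 : ℓ = ℓ ^ (1 - p) * ℓ ^ p := by rw [← Real.rpow_add hl]; simp
  have hq : 0 < ℓ ^ (1 - p) := by positivity
  have hDq : 0 < D ^ (1 - p) := by positivity
  rw [Real.mul_rpow hDp.le hl.le] at h1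
  have h2 : c * (ℓ ^ (1 - p) * ℓ ^ p) ≤ 2 * (D ^ (1 - p) * ℓ ^ (1 - p)) * dI T1 T2 (incP u ℓ p) := by
    rw [← e1]; linarith
  rw [div_mul_eq_mul_div, div_le_iff₀ (by positivity)]
  refine le_of_mul_le_mul_left ?_ hq
  linarith

end

/-- There exist `ν₀ ∈ (0,1]`, `C₁ > 0` and, for each `p ≥ 0`, a
constant `c(p) > 0`, such that for every `ν ∈ (0,ν₀]` and every
`ℓ ∈ (0, C₁ν]`, `S_p(ℓ) ≥ c(p) ℓ^p` if `0 ≤ p ≤ 1` and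
`S_p(ℓ) ≥ c(p) ℓ^p ν^{-(p-1)}` if `p ≥ 1`. -/
theorem statement17 (f : ℝ → ℝ) (σ D Ct : ℝ) (hCt : 0 < Ct)
    (hCtb : ∀ ν, 0 < ν → ν ≤ 1 →
      ∀ u : ℝ → ℝ → ℝ, IsBurgersSolution f σ ν u → burgersD u = D →
        ∀ t, 0 ≤ t → sobLp 1 2 (u t) ^ 2 ≤ Ct * ν⁻¹) :
    ∃ ν₀, (0 < ν₀ ∧ ν₀ ≤ 1) ∧ ∃ C₁ > (0 : ℝ), ∀ p : ℝ, 0 ≤ p → ∃ c > 0,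
      ∀ ν, 0 < ν → ν ≤ ν₀ →
        ∀ u : ℝ → ℝ → ℝ, IsBurgersSolution f σ ν u → burgersD u = D →
          ∀ ℓ, 0 < ℓ → ℓ ≤ C₁ * ν →
            (p ≤ 1 →
              c * ℓ ^ p
                ≤ structFun (burgersT₁ D Ct) (burgersT₂ σ D Ct) u p ℓ) ∧
            (1 ≤ p →
              c * (ℓ ^ p * ν ^ (-(p - 1)))
                ≤ structFun (burgersT₁ D Ct) (burgersT₂ σ D Ct) u p ℓ) := by
  by_cases hex : ∃ ν, 0 < ν ∧ ν ≤ 1 ∧ ∃ u, IsBurgersSolution f σ ν u ∧ burgersD u = D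
  swap
  · refine ⟨1, ⟨one_pos, le_refl _⟩, 1, one_pos, fun p _ => ⟨1, one_pos, ?_⟩⟩
    intro ν hν hν1 u hu hD
    exact absurd ⟨ν, hν, hν1, u, hu, hD⟩ hex
  obtain ⟨νr, _, _, ur, hr, hrD⟩ := hex
  have hDp : 0 < D := (hr.init hrD).1
  have hσ := hr.hσ
  obtain ⟨M, hM⟩ : ∃ M, ∀ y, |y| ≤ D → |deriv f y| ≤ M := by
    obtain ⟨M, hM⟩ := isCompact_Icc.exists_bound_of_continuousOn
      (hr.fp_smooth.continuous.continuousOn (s := Icc (-D) D))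
    exact ⟨M, fun y hy => hM y (abs_le.1 hy)⟩
  have hT1p : 0 < burgersT₁ D Ct := by unfold burgersT₁; positivity
  have hT12 : burgersT₁ D Ct < burgersT₂ σ D Ct :=
    lt_of_lt_of_le (by linarith) (le_max_left _ _)
  have hT2 : 2 * D * σ⁻¹ ≤ burgersT₂ σ D Ct := le_max_right _ _
  have hT1eq : burgersT₁ D Ct = (D ^ 2)⁻¹ * Ct⁻¹ / 4 := rfl
  generalize burgersT₁ D Ct = T1 at *
  generalize burgersT₂ σ D Ct = T2 at *
  have hT : 0 < T2 - T1 := sub_pos.2 hT12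
  obtain ⟨α, hα⟩ : ∃ α, α = D⁻¹ ^ 2 / 8 := ⟨_, rfl⟩
  obtain ⟨β, hβ⟩ : ∃ β, β = Ct * (1 + M ^ 2 * (T2 - T1)) := ⟨_, rfl⟩
  have hαp : 0 < α := by rw [hα]; positivity
  have hβp : 0 < β := by rw [hβ]; positivity
  obtain ⟨Γ3, hΓ3⟩ : ∃ Γ, Γ = Ct * (((T2 - T1) * (1 + Ct) + β) / 2) := ⟨_, rfl⟩
  have hΓ3p : 0 < Γ3 := by rw [hΓ3]; positivity
  obtain ⟨Γ1, hΓ1⟩ : ∃ Γ, Γ = 2 * D * (T2 - T1) := ⟨_, rfl⟩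
  have hΓ1p : 0 < Γ1 := by rw [hΓ1]; positivity
  have key : ∀ ν, 0 < ν → ν ≤ 1 → ∀ u : ℝ → ℝ → ℝ, IsBurgersSolution f σ ν u → burgersD u = D →
      ∀ ℓ, 0 < ℓ → ℓ ≤ √(α / (4 * β)) * ν →
      α / 4 * (ℓ ^ 2 / ν) ≤ dI T1 T2 (incP u ℓ 2) ∧
      dI T1 T2 (incP u ℓ 3) ≤ Γ3 * (ℓ ^ 3 / ν ^ 2) ∧
      dI T1 T2 (incP u ℓ 1) ≤ Γ1 * ℓ ∧ (∀ t, 0 ≤ t → ∀ x, dX u t x ≤ D) := by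
    intro ν hν hν1 u h hD ℓ hl hlC
    have hY : ∀ t, 0 ≤ t → ∫ x in (0:ℝ)..1, dX u t x ^ 2 ≤ Ct * ν⁻¹ := by
      intro t ht
      have h1 := hCtb ν hν hν1 u h hD t ht
      rw [sobLp_one_two (h.perC2 ht).c1] at h1
      exact h1
    have hI1 := h.I1 hD hCt hY hT1eq hT12 hT2
    have hI2 := h.I2 hD hCt hν1 hY hT1p hT12 hM
    rw [← hα] at hI1
    rw [← hβ] at hI2
    have hlν : 4 * β * ℓ ^ 2 ≤ α * ν ^ 2 := by
      have h1 : ℓ ^ 2 ≤ (√(α / (4 * β)) * ν) ^ 2 := pow_le_pow_left₀ hl.le hlC 2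
      rw [mul_pow, Real.sq_sqrt (by positivity)] at h1
      calc 4 * β * ℓ ^ 2 ≤ 4 * β * (α / (4 * β) * ν ^ 2) := by gcongr
        _ = α * ν ^ 2 := by field_simp
    have hG : ∀ t, 0 ≤ t → ∀ x, dX u t x ≤ D := by
      intro t ht x
      refine (h.oleinik hDp (h.init hD).2.1 ht x).trans (div_le_self hDp.le ?_)
      have : 0 ≤ σ * D * t := by positivity
      linarith
    refine ⟨h.L2 hl hT1p.le hT12.le hI1 hI2 hlν, ?_, ?_, hG⟩
    · rw [hΓ3]; exact h.U3 hl hT1p.le hT12.le hCt hY hI2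
    · rw [hΓ1]; exact h.U1 hl hT1p.le hT12.le hDp hG
  have hi : ∀ p : ℝ, 1 ≤ p → ∃ c > 0, ∀ ν, 0 < ν → ν ≤ 1 → ∀ u : ℝ → ℝ → ℝ,
      IsBurgersSolution f σ ν u → burgersD u = D →
      ∀ ℓ, 0 < ℓ → ℓ ≤ √(α / (4 * β)) * ν →
        c * (ℓ ^ p * ν ^ (-(p - 1))) ≤ dI T1 T2 (incP u ℓ p) := by
    intro p hp1
    rcases le_total p 2 with hp2 | hp2
    · refine ⟨α / 8 * (8 * Γ3 / α) ^ (p - 2), by positivity, ?_⟩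
      intro ν hν hν1 u h hD ℓ hl hlC
      obtain ⟨k1, k2, k3, k4⟩ := key ν hν hν1 u h hD ℓ hl hlC
      exact final_mid h hl hT1p.le hT12.le hαp hΓ3p k1 k2 hp1 hp2
    · refine ⟨α / 8 * (α / (8 * Γ1)) ^ (p - 2), by positivity, ?_⟩
      intro ν hν hν1 u h hD ℓ hl hlC
      obtain ⟨k1, k2, k3, k4⟩ := key ν hν hν1 u h hD ℓ hl hlC
      exact final_hi h hl hT1p.le hT12.le hαp hΓ1p k1 k3 hp2
  refine ⟨1, ⟨one_pos, le_refl _⟩, √(α / (4 * β)), Real.sqrt_pos.2 (by positivity), fun p hp0 => ?_⟩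
  have hTi : 0 < (T2 - T1)⁻¹ := inv_pos.2 hT
  rcases le_or_gt p 1 with hp1 | hp1
  · obtain ⟨c, hc, hcc⟩ := hi 1 le_rfl
    have hlo : ∀ ν, 0 < ν → ν ≤ 1 → ∀ u : ℝ → ℝ → ℝ,
        IsBurgersSolution f σ ν u → burgersD u = D →
        ∀ ℓ, 0 < ℓ → ℓ ≤ √(α / (4 * β)) * ν →
        (T2 - T1)⁻¹ * (c / (2 * D ^ (1 - p))) * ℓ ^ p ≤ structFun T1 T2 u p ℓ := by
      intro ν hν hν1 u h hD ℓ hl hlC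
      obtain ⟨k1, k2, k3, k4⟩ := key ν hν hν1 u h hD ℓ hl hlC
      have h1 := hcc ν hν hν1 u h hD ℓ hl hlC
      have h2 : c * ℓ ≤ dI T1 T2 (incP u ℓ 1) := by
        have e : ℓ ^ (1:ℝ) * ν ^ (-((1:ℝ) - 1)) = ℓ := by
          rw [sub_self, neg_zero, Real.rpow_zero, Real.rpow_one, mul_one]
        rw [e] at h1
        exact h1
      rw [structFun_eq, mul_assoc]
      exact mul_le_mul_of_nonneg_left (final_lo h hl hT1p.le hT12.le hDp k4 h2 hp0 hp1) hTi.le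
    refine ⟨(T2 - T1)⁻¹ * (c / (2 * D ^ (1 - p))), by positivity, ?_⟩
    intro ν hν hν1 u h hD ℓ hl hlC
    have h1 := hlo ν hν hν1 u h hD ℓ hl hlC
    refine ⟨fun _ => h1, fun hp => ?_⟩
    have e : ν ^ (-(p - 1)) = 1 := by
      rw [le_antisymm hp1 hp, sub_self, neg_zero, Real.rpow_zero]
    rw [e, mul_one]
    exact h1
  · obtain ⟨c, hc, hcc⟩ := hi p hp1.le
    refine ⟨(T2 - T1)⁻¹ * c, by positivity, ?_⟩
    intro ν hν hν1 u h hD ℓ hl hlC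
    refine ⟨fun hp => absurd hp (not_le.2 hp1), fun _ => ?_⟩
    rw [structFun_eq, mul_assoc]
    exact mul_le_mul_of_nonneg_left (hcc ν hν hν1 u h hD ℓ hl hlC) hTi.le
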